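/- arXiv:1901.05361 — 4 statements merged into one kernel-verified Lean document; each statement's English description precedes it below -/
import Mathlib

section
/- Global convergence of the dual ADMM. Suppose the dual problem (D): minimize (1/2)‖u‖² + ⟨u,b⟩ + p*(v) + q*(w) over (u,v,w) ∈ 𝒵×𝒳×𝒴 subject to −A*u = v and −B*u = w, has a nonempty set of optimal solutions, and the constraint qualification holds: there exists u ∈ 𝒵 with −A*u in the relative interior of dom p* and −B*u in the relative interior of dom q*. Let σ > 0 and τ ∈ (0, (1+√5)/2), and let sequences (uᵏ, vᵏ, wᵏ, xᵏ, yᵏ)_{k≥0} in 𝒵×𝒳×𝒴×𝒳×𝒴 satisfy, for every k ≥ 0: (I + σAA* + σBB*)u^{k+1} = Axᵏ + Byᵏ − b − σAvᵏ − σBwᵏ; v^{k+1} = Prox_{p*/σ}(xᵏ/σ − A*u^{k+1}); w^{k+1} = Prox_{q*/σ}(yᵏ/σ − B*u^{k+1}); x^{k+1} = xᵏ + τσ(−A*u^{k+1} − v^{k+1}); y^{k+1} = yᵏ + τσ(−B*u^{k+1} − w^{k+1}). Then the sequence (uᵏ, vᵏ, wᵏ) converges to an optimal solution of (D), and the sequence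 (xᵏ, yᵏ) converges to a minimizer of F(x,y) = (1/2)‖Ax + By − b‖² + p(x) + q(y). -/
/-!
The two dual blocks `s = (v, w)` live in the Hilbert sum `𝒳 ⊕ 𝒴`, with multiplier `z = (x, y)` and
constraint `T u = s`, `T u = (-A*u, -B*u)`, `T'(x, y) = -(Ax + By)` being the adjoint of `T`.

*Duality.* The constraint qualification gives multipliers at a dual optimum: the smooth part of the
objective is linearized there, and M. Riesz' extension theorem, applied to the cone generated by
the epigraph of `p* ⊕ q*`, extends the resulting functional from the range of `T`
(`exists_multiplier`, `exists_kkt`). Subgradients of `p*` are turned into the relation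
`s ∈ ∂p(z)` by the Fenchel–Moreau argument `mem_subgradRel_of_conj`; that relation is monotone with
closed graph, contains the pairs produced by the proximal steps (`mem_subgradRel_of_isProx`), and
yields primal optimality of the multipliers directly (`primal_optimal`).

*Convergence.* With `r k = T (u k) - s k` and a Karush–Kuhn–Tucker point `(us, T us, zs)`, the
function
`1/(2τσ) ‖z k - zs‖² + σ/2 ‖s k - T us‖² + σ/2 (1 - τ)² ‖r k‖²`
decreases by at least `‖u (k+1) - us‖² + σ (1 + τ - τ²)/2 ‖r (k+1)‖²` (`lyapunov_step`); the
coefficient is positive precisely because `τ` is below the golden ratio. Hence `u k → us`,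
`r k → 0` and `s k → T us`. The bounded sequence `z k` has a cluster point, which is a multiplier
by closedness, and replacing `zs` by it in the Lyapunov function gives convergence of the whole
sequence (`admm_abstract`).
-/

open scoped RealInnerProductSpace
open Filter Topology

noncomputable section

/-- Fenchel conjugate of an extended-real-valued function:
`f*(y) = sup_x (⟪y, x⟫ - f x)`. -/
def fenchelConj {E : Type*} [NormedAddCommGroup E] [InnerProductSpace ℝ E]
    (f : E → EReal) (y : E) : EReal :=
  ⨆ x : E, ((⟪y, x⟫ : ℝ) : EReal) - f x

/-- `IsProx f σ x p` says that `p = Prox_{σ f}(x)`, i.e. `p` minimizes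
`u ↦ f u + (1/(2σ)) ‖u - x‖²`. -/
def IsProx {E : Type*} [NormedAddCommGroup E] [InnerProductSpace ℝ E]
    (f : E → EReal) (σ : ℝ) (x p : E) : Prop :=
  ∀ u : E, f p + (((1 / (2 * σ)) * ‖p - x‖ ^ 2 : ℝ) : EReal)
    ≤ f u + (((1 / (2 * σ)) * ‖u - x‖ ^ 2 : ℝ) : EReal)

/-- A proper, lower semicontinuous, convex extended-real-valued function. -/
def ProperConvexLsc {E : Type*} [NormedAddCommGroup E] [InnerProductSpace ℝ E]
    (f : E → EReal) : Prop :=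
  (∀ x, f x ≠ ⊥) ∧ (∃ x, f x ≠ ⊤) ∧ LowerSemicontinuous f ∧
  ∀ x y : E, ∀ a c : ℝ, 0 ≤ a → 0 ≤ c → a + c = 1 →
    f (a • x + c • y) ≤ (a : EReal) * f x + (c : EReal) * f y

variable {𝒳 𝒴 𝒵 : Type*}
  [NormedAddCommGroup 𝒳] [InnerProductSpace ℝ 𝒳] [FiniteDimensional ℝ 𝒳]
  [NormedAddCommGroup 𝒴] [InnerProductSpace ℝ 𝒴] [FiniteDimensional ℝ 𝒴]
  [NormedAddCommGroup 𝒵] [InnerProductSpace ℝ 𝒵] [FiniteDimensional ℝ 𝒵]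

/-- The objective of the dual problem (D):
`(1/2)‖u‖² + ⟪u,b⟫ + p*(v) + q*(w)`. -/
def dualObj (b : 𝒵) (p : 𝒳 → EReal) (q : 𝒴 → EReal) (m : 𝒵 × 𝒳 × 𝒴) : EReal :=
  ((1 / 2 * ‖m.1‖ ^ 2 + ⟪m.1, b⟫ : ℝ) : EReal)
    + fenchelConj p m.2.1 + fenchelConj q m.2.2

/-- Feasibility for the dual problem (D): `−A*u = v` and `−B*u = w`. -/
def dualFeasible (A : 𝒳 →ₗ[ℝ] 𝒵) (B : 𝒴 →ₗ[ℝ] 𝒵) (m : 𝒵 × 𝒳 × 𝒴) : Prop :=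
  -(LinearMap.adjoint A m.1) = m.2.1 ∧ -(LinearMap.adjoint B m.1) = m.2.2

/-- Optimality for the dual problem (D). -/
def isDualOptimal (A : 𝒳 →ₗ[ℝ] 𝒵) (B : 𝒴 →ₗ[ℝ] 𝒵) (b : 𝒵)
    (p : 𝒳 → EReal) (q : 𝒴 → EReal) (m : 𝒵 × 𝒳 × 𝒴) : Prop :=
  dualFeasible A B m ∧
    ∀ m' : 𝒵 × 𝒳 × 𝒴, dualFeasible A B m' → dualObj b p q m ≤ dualObj b p q m'

/-- The primal objective `F(x,y) = (1/2)‖Ax + By − b‖² + p(x) + q(y)`. -/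
def primalObj (A : 𝒳 →ₗ[ℝ] 𝒵) (B : 𝒴 →ₗ[ℝ] 𝒵) (b : 𝒵)
    (p : 𝒳 → EReal) (q : 𝒴 → EReal) (m : 𝒳 × 𝒴) : EReal :=
  ((1 / 2 * ‖A m.1 + B m.2 - b‖ ^ 2 : ℝ) : EReal) + p m.1 + q m.2

/-! ### Convergence of the abstract iteration -/

/-- Algebraic core of the decrease of the Lyapunov function: the three (in)equalities come from
the `u`-optimality condition and from two uses of monotonicity. The cross term is absorbed by
`‖d + (1 - τ) r‖² ≥ 0`. -/
lemma lyapunov_core {E : Type*} [NormedAddCommGroup E] [InnerProductSpace ℝ E]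
    {σ τ N : ℝ} (hσ : 0 < σ) (hτ : 0 < τ) (z s r r' d : E)
    (h1 : N + ⟪z + σ • (r' + d), r' + (s + d)⟫ = 0)
    (h2 : 0 ≤ ⟪z + σ • r', s + d⟫)
    (h3 : 0 ≤ ⟪(z + σ • r') - (z + ((1 - τ) * σ) • r), d⟫) :
    1 / (2 * τ * σ) * ‖z + (τ * σ) • r'‖ ^ 2 + σ / 2 * ‖s + d‖ ^ 2
        + σ / 2 * (1 - τ) ^ 2 * ‖r'‖ ^ 2 + N + σ * (1 + τ - τ ^ 2) / 2 * ‖r'‖ ^ 2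
      ≤ 1 / (2 * τ * σ) * ‖z‖ ^ 2 + σ / 2 * ‖s‖ ^ 2 + σ / 2 * (1 - τ) ^ 2 * ‖r‖ ^ 2 := by
  have hz : 1 / (2 * τ * σ) * ‖z + (τ * σ) • r'‖ ^ 2
      = 1 / (2 * τ * σ) * ‖z‖ ^ 2 + ⟪z, r'⟫ + τ * σ / 2 * ‖r'‖ ^ 2 := by
    rw [norm_add_sq_real, norm_smul, inner_smul_right, Real.norm_of_nonneg (by positivity)]
    field_simp
  have hs : ‖s + d‖ ^ 2 = ‖s‖ ^ 2 + 2 * ⟪s, d⟫ + ‖d‖ ^ 2 := norm_add_sq_real s d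
  have hq : 0 ≤ σ / 2 * ‖d + (1 - τ) • r‖ ^ 2 := by positivity
  have hq' : ‖d + (1 - τ) • r‖ ^ 2
      = ‖d‖ ^ 2 + 2 * ((1 - τ) * ⟪r, d⟫) + (1 - τ) ^ 2 * ‖r‖ ^ 2 := by
    rw [norm_add_sq_real, norm_smul, inner_smul_right, mul_pow, Real.norm_eq_abs, sq_abs,
      real_inner_comm]
  rw [hz, hs]
  rw [hq'] at hq
  simp only [inner_add_left, inner_add_right, inner_sub_left, inner_smul_left,
    real_inner_self_eq_norm_sq, RCLike.conj_to_real] at h1 h2 h3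
  rw [real_inner_comm s d] at h1
  rw [real_inner_comm d r'] at h1
  rw [real_inner_comm d r'] at h3
  simp only [real_inner_comm r' d] at *
  nlinarith

section Abstract

variable {Z E : Type*} [NormedAddCommGroup Z] [InnerProductSpace ℝ Z]
  [NormedAddCommGroup E] [InnerProductSpace ℝ E]

/-- The Lyapunov function decreases along the ADMM iteration, relative to any
Karush–Kuhn–Tucker point `(us, T us, zs)`. -/
lemma lyapunov_step (T : Z →ₗ[ℝ] E) (T' : E →ₗ[ℝ] Z) (hT : ∀ u z, ⟪T u, z⟫ = ⟪u, T' z⟫)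
    (b : Z) (M : Set (E × E))
    (hmono : ∀ s z s' z', (s, z) ∈ M → (s', z') ∈ M → 0 ≤ ⟪z - z', s - s'⟫)
    {σ τ : ℝ} (hσ : 0 < σ) (hτ : 0 < τ)
    {u' us : Z} {s s' z z' zs r r' : E}
    (h1 : u' + b + T' (z + σ • (T u' - s)) = 0)
    (h2 : (s, z + ((1 - τ) * σ) • r) ∈ M) (h2' : (s', z' + ((1 - τ) * σ) • r') ∈ M)
    (hr' : r' = T u' - s')
    (h3 : z' = z + (τ * σ) • r')
    (k1 : us + b + T' zs = 0) (k2 : (T us, zs) ∈ M) :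
    1 / (2 * τ * σ) * ‖z' - zs‖ ^ 2 + σ / 2 * ‖s' - T us‖ ^ 2
        + σ / 2 * (1 - τ) ^ 2 * ‖r'‖ ^ 2 + ‖u' - us‖ ^ 2
        + σ * (1 + τ - τ ^ 2) / 2 * ‖r'‖ ^ 2
      ≤ 1 / (2 * τ * σ) * ‖z - zs‖ ^ 2 + σ / 2 * ‖s - T us‖ ^ 2
        + σ / 2 * (1 - τ) ^ 2 * ‖r‖ ^ 2 := by
  have e1 : z' + ((1 - τ) * σ) • r' = z + σ • r' := by
    rw [h3]; module
  rw [e1] at h2'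
  have hTu : T u' = r' + s' := by rw [hr']; abel
  have key := lyapunov_core (N := ‖u' - us‖ ^ 2) hσ hτ (z - zs) (s - T us) r r' (s' - s) ?_ ?_ ?_
  · have a1 : z - zs + (τ * σ) • r' = z' - zs := by rw [h3]; abel
    have a2 : s - T us + (s' - s) = s' - T us := by abel
    rwa [a1, a2] at key
  · have a1 : r' + (s - T us + (s' - s)) = T (u' - us) := by rw [map_sub, hTu]; abel
    have a2 : T' (z - zs + σ • (r' + (s' - s))) = -(u' - us) := by
      have : z - zs + σ • (r' + (s' - s)) = (z + σ • (T u' - s)) - zs := by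
        rw [hTu]; module
      rw [this, map_sub, eq_neg_of_add_eq_zero_right h1, eq_neg_of_add_eq_zero_right k1]
      abel
    rw [a1, real_inner_comm, hT, a2, inner_neg_right, real_inner_self_eq_norm_sq]
    ring
  · have := hmono _ _ _ _ h2' k2
    convert this using 2
    · abel
    · abel
  · have := hmono _ _ _ _ h2' h2
    convert this using 2
    abel

/-- Convergence of the two-block ADMM with step length `τ`, for the inclusion
`0 = u + b + T' z`, `z ∈ M s`, `T u = s` with `M` monotone and of closed graph. -/
theorem admm_abstract [FiniteDimensional ℝ Z] [FiniteDimensional ℝ E]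
    (T : Z →ₗ[ℝ] E) (T' : E →ₗ[ℝ] Z) (hT : ∀ u z, ⟪T u, z⟫ = ⟪u, T' z⟫)
    (b : Z) (M : Set (E × E)) (hclosed : IsClosed M)
    (hmono : ∀ s z s' z', (s, z) ∈ M → (s', z') ∈ M → 0 ≤ ⟪z - z', s - s'⟫)
    {σ τ : ℝ} (hσ : 0 < σ) (hτ : 0 < τ) (hτ' : τ ^ 2 < 1 + τ)
    (u : ℕ → Z) (s z : ℕ → E)
    (h1 : ∀ k, u (k + 1) + b + T' (z k + σ • (T (u (k + 1)) - s k)) = 0)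
    (h2 : ∀ k, (s k, z k + ((1 - τ) * σ) • (T (u k) - s k)) ∈ M)
    (h3 : ∀ k, z (k + 1) = z k + (τ * σ) • (T (u (k + 1)) - s (k + 1)))
    (us : Z) (zs : E) (k1 : us + b + T' zs = 0) (k2 : (T us, zs) ∈ M) :
    Tendsto u atTop (𝓝 us) ∧ Tendsto s atTop (𝓝 (T us)) ∧
      ∃ z', Tendsto z atTop (𝓝 z') ∧ (T us, z') ∈ M ∧ us + b + T' z' = 0 := by
  have hTc : Continuous T := T.continuous_of_finiteDimensional
  have hTc' : Continuous T' := T'.continuous_of_finiteDimensional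
  set r : ℕ → E := fun k => T (u k) - s k with hr
  set Φ : E → ℕ → ℝ := fun zs k => 1 / (2 * τ * σ) * ‖z k - zs‖ ^ 2 + σ / 2 * ‖s k - T us‖ ^ 2
        + σ / 2 * (1 - τ) ^ 2 * ‖r k‖ ^ 2 with hΦ
  have hstep : ∀ zs, us + b + T' zs = 0 → (T us, zs) ∈ M → ∀ k,
      Φ zs (k + 1) + ‖u (k + 1) - us‖ ^ 2 + σ * (1 + τ - τ ^ 2) / 2 * ‖r (k + 1)‖ ^ 2
        ≤ Φ zs k := fun zs k1 k2 k =>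
    lyapunov_step T T' hT b M hmono hσ hτ (h1 k) (h2 k) (h2 (k + 1)) rfl (h3 k) k1 k2
  have hδ : 0 < σ * (1 + τ - τ ^ 2) / 2 := by
    have : 0 < 1 + τ - τ ^ 2 := by linarith
    positivity
  have hΦ0 : ∀ zs k, 0 ≤ Φ zs k := fun zs k => by simp only [hΦ]; positivity
  have hanti : ∀ zs, us + b + T' zs = 0 → (T us, zs) ∈ M → Antitone (Φ zs) :=
    fun zs k1 k2 => antitone_nat_of_succ_le fun k => by
      have := hstep zs k1 k2 k
      have : 0 ≤ ‖u (k + 1) - us‖ ^ 2 := by positivity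
      have : 0 ≤ σ * (1 + τ - τ ^ 2) / 2 * ‖r (k + 1)‖ ^ 2 := by positivity
      linarith
  -- The decrements of a bounded below antitone sequence tend to `0`.
  have hdec : Tendsto (fun k => Φ zs k - Φ zs (k + 1)) atTop (𝓝 0) := by
    have h := tendsto_atTop_ciInf (hanti zs k1 k2) ⟨0, by rintro _ ⟨k, rfl⟩; exact hΦ0 zs k⟩
    simpa using h.sub (h.comp (tendsto_add_atTop_nat 1))
  have hu : Tendsto u atTop (𝓝 us) := by
    rw [← tendsto_add_atTop_iff_nat 1, tendsto_iff_norm_sub_tendsto_zero]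
    have : Tendsto (fun k => ‖u (k + 1) - us‖ ^ 2) atTop (𝓝 0) :=
      squeeze_zero (fun k => by positivity) (fun k => by
        have := hstep zs k1 k2 k
        have : 0 ≤ σ * (1 + τ - τ ^ 2) / 2 * ‖r (k + 1)‖ ^ 2 := by positivity
        linarith) hdec
    simpa using this.sqrt
  have hr0 : Tendsto r atTop (𝓝 0) := by
    rw [← tendsto_add_atTop_iff_nat 1, tendsto_zero_iff_norm_tendsto_zero]
    have : Tendsto (fun k => σ * (1 + τ - τ ^ 2) / 2 * ‖r (k + 1)‖ ^ 2) atTop (𝓝 0) :=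
      squeeze_zero (fun k => by positivity) (fun k => by
        have := hstep zs k1 k2 k
        have : 0 ≤ ‖u (k + 1) - us‖ ^ 2 := by positivity
        linarith) hdec
    have := (this.const_mul (σ * (1 + τ - τ ^ 2) / 2)⁻¹).sqrt
    simpa only [← mul_assoc, inv_mul_cancel₀ hδ.ne', one_mul, Real.sqrt_sq (norm_nonneg _),
      mul_zero, Real.sqrt_zero] using this
  have hTu : Tendsto (fun k => T (u k)) atTop (𝓝 (T us)) := (hTc.tendsto us).comp hu
  have hs : Tendsto s atTop (𝓝 (T us)) := by
    have := hTu.sub hr0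
    simpa [hr] using this
  refine ⟨hu, hs, ?_⟩
  have hbdd : ∀ k, z k ∈ Metric.closedBall zs (√(2 * τ * σ * Φ zs 0)) := fun k => by
    rw [mem_closedBall_iff_norm]
    apply Real.le_sqrt_of_sq_le
    have h : 1 / (2 * τ * σ) * ‖z k - zs‖ ^ 2 ≤ Φ zs 0 := by
      refine le_trans ?_ (hanti zs k1 k2 (Nat.zero_le k))
      simp only [hΦ]
      have : 0 ≤ σ / 2 * ‖s k - T us‖ ^ 2 := by positivity
      have : 0 ≤ σ / 2 * (1 - τ) ^ 2 * ‖r k‖ ^ 2 := by positivity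
      linarith
    have h' := mul_le_mul_of_nonneg_left h (show 0 ≤ 2 * τ * σ by positivity)
    rwa [← mul_assoc, mul_one_div_cancel (by positivity), one_mul] at h'
  have : ProperSpace E := FiniteDimensional.proper_real E
  obtain ⟨z', -, φ, hφ, hz'⟩ := (isCompact_closedBall zs _).tendsto_subseq hbdd
  have hMz : (T us, z') ∈ M := by
    refine hclosed.mem_of_tendsto (b := atTop)
      (f := fun k => (s (φ k), z (φ k) + ((1 - τ) * σ) • r (φ k))) ?_
      (Eventually.of_forall fun k => h2 (φ k))
    refine (hs.comp hφ.tendsto_atTop).prodMk_nhds ?_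
    simpa using hz'.add ((hr0.comp hφ.tendsto_atTop).const_smul ((1 - τ) * σ))
  have hKz : us + b + T' z' = 0 := by
    have hu1 : Tendsto (fun k => u (φ k + 1)) atTop (𝓝 us) :=
      (hu.comp (tendsto_add_atTop_nat 1)).comp hφ.tendsto_atTop
    have hl : Tendsto (fun k => u (φ k + 1) + b
        + T' (z (φ k) + σ • (T (u (φ k + 1)) - s (φ k)))) atTop
        (𝓝 (us + b + T' (z' + σ • (T us - T us)))) :=
      (hu1.add_const b).add ((hTc'.tendsto _).comp
        (hz'.add ((((hTc.tendsto us).comp hu1).sub (hs.comp hφ.tendsto_atTop)).const_smul σ)))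
    simp only [h1] at hl
    simpa using (tendsto_nhds_unique tendsto_const_nhds hl).symm
  refine ⟨z', ?_, hMz, hKz⟩
  -- With `z'` in place of `zs`, the Lyapunov function has a subsequence tending to `0`.
  have hΦz : Tendsto (Φ z') atTop (𝓝 0) := by
    have h := tendsto_atTop_ciInf (hanti z' hKz hMz) ⟨0, by rintro _ ⟨k, rfl⟩; exact hΦ0 z' k⟩
    have hsub : Tendsto (Φ z' ∘ φ) atTop (𝓝 0) := by
      have a1 := (((hz'.sub_const z').norm.pow 2).const_mul (1 / (2 * τ * σ)))
      have a2 := ((((hs.comp hφ.tendsto_atTop).sub_const (T us)).norm.pow 2).const_mul (σ / 2))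
      have a3 := (((hr0.comp hφ.tendsto_atTop).norm.pow 2).const_mul (σ / 2 * (1 - τ) ^ 2))
      have a := (a1.add a2).add a3
      simp only [sub_self, norm_zero, ne_eq, OfNat.ofNat_ne_zero, not_false_eq_true, zero_pow,
        mul_zero, add_zero] at a
      exact a
    rwa [tendsto_nhds_unique (h.comp hφ.tendsto_atTop) hsub] at h
  rw [tendsto_iff_norm_sub_tendsto_zero]
  have hsq : Tendsto (fun k => 1 / (2 * τ * σ) * ‖z k - z'‖ ^ 2) atTop (𝓝 0) :=
    squeeze_zero (fun k => by positivity) (fun k => by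
      have : 0 ≤ σ / 2 * ‖s k - T us‖ ^ 2 := by positivity
      have : 0 ≤ σ / 2 * (1 - τ) ^ 2 * ‖r k‖ ^ 2 := by positivity
      simp only [hΦ]
      linarith) hΦz
  have := (hsq.const_mul (2 * τ * σ)).sqrt
  have hne : 2 * τ * σ * (1 / (2 * τ * σ)) = 1 := mul_one_div_cancel (by positivity)
  simpa only [← mul_assoc, hne, one_mul, Real.sqrt_sq (norm_nonneg _), mul_zero,
    Real.sqrt_zero] using this

end Abstract

/-! ### Multipliers, conjugates and subgradients -/

lemma nonneg_of_forall_small {a c : ℝ} (h : ∀ t : ℝ, 0 < t → t ≤ 1 → 0 ≤ t * a + t ^ 2 * c) :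
    0 ≤ a := by
  have hl : Tendsto (fun t : ℝ => a + t * c) (𝓝[>] 0) (𝓝 (a + 0 * c)) :=
    ((continuous_const.add (continuous_id.mul continuous_const)).tendsto 0).mono_left
      nhdsWithin_le_nhds
  rw [zero_mul, add_zero] at hl
  refine ge_of_tendsto hl ?_
  filter_upwards [Ioc_mem_nhdsGT (zero_lt_one (α := ℝ))] with t ht
  have := h t ht.1 ht.2
  have ht0 := ht.1
  by_contra! hneg
  nlinarith

/-- A Lagrange multiplier exists under the relative interior qualification, in algebraic form:
if `h ↦ G (C (a + h)) - c h` is minimal at `h = 0` and `C a0` lies in the relative algebraic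
interior of the domain `D` of the convex function `G`, then `c = e ∘ C` for a subgradient `e` of
`G` at `C a`. This is M. Riesz' extension theorem for the cone generated by the epigraph. -/
lemma exists_multiplier {Z F : Type*} [AddCommGroup Z] [Module ℝ Z] [AddCommGroup F] [Module ℝ F]
    (C : Z →ₗ[ℝ] F) (c : Z →ₗ[ℝ] ℝ) {D : Set F} {G : F → ℝ} (hG : ConvexOn ℝ D G)
    (a : Z) (ha : C a ∈ D) (hmin : ∀ h, C (a + h) ∈ D → G (C a) + c h ≤ G (C (a + h)))
    (a0 : Z) (V : Submodule ℝ F) (hV : ∀ z ∈ D, z - C a0 ∈ V)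
    (hri : ∀ v ∈ V, ∃ ε : ℝ, 0 < ε ∧ C a0 + ε • v ∈ D) :
    ∃ e : F →ₗ[ℝ] ℝ, (∀ h, e (C h) = c h) ∧ ∀ z ∈ D, G (C a) + e (z - C a) ≤ G z := by
  -- A linear projection onto the span of `V` and the range of `C`.
  set W : Submodule ℝ F := V ⊔ LinearMap.range C with hW
  obtain ⟨π₀, hπ₀⟩ := W.subtype.exists_leftInverse_of_injective W.ker_subtype
  set π : F →ₗ[ℝ] F := W.subtype ∘ₗ π₀ with hπ
  have hπW : ∀ x, π x ∈ W := fun x => (π₀ x).2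
  have hπid : ∀ x ∈ W, π x = x := fun x hx => by
    have := LinearMap.congr_fun hπ₀ ⟨x, hx⟩
    simpa [hπ] using congrArg Subtype.val this
  have hCW : ∀ h, C h ∈ W := fun h => Submodule.mem_sup_right (LinearMap.mem_range_self C h)
  let K : PointedCone ℝ (Z × F × ℝ) :=
    { carrier := {m | ∃ s : ℝ, 0 < s ∧ C a + s • (C m.1 + π m.2.1) ∈ D ∧
        G (C a + s • (C m.1 + π m.2.1)) ≤ G (C a) + s * m.2.2}
      zero_mem' := ⟨1, one_pos, by simpa using ha, by simp⟩
      add_mem' := by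
        rintro ⟨h, d, r⟩ ⟨h', d', r'⟩ ⟨s, hs, hD, hle⟩ ⟨s', hs', hD', hle'⟩
        have hss : 0 < s + s' := add_pos hs hs'
        have hsum : s' / (s + s') + s / (s + s') = 1 := by field_simp; ring
        have e1 : C a + (s * s' / (s + s')) • (C (h + h') + π (d + d'))
            = (s' / (s + s')) • (C a + s • (C h + π d))
              + (s / (s + s')) • (C a + s' • (C h' + π d')) := by
          have : C a = (s' / (s + s')) • C a + (s / (s + s')) • C a := by
            rw [← add_smul, hsum, one_smul]
          rw [map_add, map_add]
          nth_rewrite 1 [this]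
          module
        have hp : 0 ≤ s' / (s + s') := by positivity
        have hp' : 0 ≤ s / (s + s') := by positivity
        refine ⟨s * s' / (s + s'), by positivity, ?_, ?_⟩
        · simp only [Prod.fst_add, Prod.snd_add]
          rw [e1]
          exact hG.1 hD hD' hp hp' hsum
        · simp only [Prod.fst_add, Prod.snd_add]
          rw [e1]
          refine (hG.2 hD hD' hp hp' hsum).trans ?_
          simp only [smul_eq_mul]
          have i1 := mul_le_mul_of_nonneg_left hle hp
          have i2 := mul_le_mul_of_nonneg_left hle' hp'
          refine (add_le_add i1 i2).trans (le_of_eq ?_)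
          simp only
          field_simp
          ring
      smul_mem' := by
        rintro ⟨t, ht⟩ ⟨h, d, r⟩ ⟨s, hs, hD, hle⟩
        change ∃ s' : ℝ, 0 < s' ∧ C a + s' • (C (t • h) + π (t • d)) ∈ D ∧
          G (C a + s' • (C (t • h) + π (t • d))) ≤ G (C a) + s' * (t * r)
        rcases ht.eq_or_lt with rfl | ht
        · exact ⟨1, one_pos, by simpa using ha, by simp⟩
        · have e1 : (s / t) • (C (t • h) + π (t • d)) = s • (C h + π d) := by
            rw [map_smul, map_smul, ← smul_add, smul_smul, div_mul_cancel₀ _ ht.ne']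
          have e2 : s / t * (t * r) = s * r := by field_simp
          exact ⟨s / t, by positivity, by rw [e1]; exact hD, by rw [e1, e2]; exact hle⟩ }
  have hK : ∀ m, m ∈ K ↔ ∃ s : ℝ, 0 < s ∧ C a + s • (C m.1 + π m.2.1) ∈ D ∧
        G (C a + s • (C m.1 + π m.2.1)) ≤ G (C a) + s * m.2.2 := fun m => Iff.rfl
  let S : Submodule ℝ (Z × F × ℝ) :=
    LinearMap.ker (LinearMap.fst ℝ F ℝ ∘ₗ LinearMap.snd ℝ Z (F × ℝ))
  have hS : ∀ m, m ∈ S ↔ m.2.1 = 0 := fun m => by simp [S]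
  let f : (Z × F × ℝ) →ₗ.[ℝ] ℝ :=
    ⟨S, (LinearMap.snd ℝ F ℝ ∘ₗ LinearMap.snd ℝ Z (F × ℝ)
      - c ∘ₗ LinearMap.fst ℝ Z (F × ℝ)) ∘ₗ S.subtype⟩
  have hf : ∀ m : f.domain, f m = (m : Z × F × ℝ).2.2 - c (m : Z × F × ℝ).1 := fun m => rfl
  have hnonneg : ∀ m : f.domain, (m : Z × F × ℝ) ∈ K → 0 ≤ f m := by
    rintro ⟨⟨h, d, r⟩, hm⟩ hmK
    have hd : d = 0 := (hS _).1 hm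
    subst hd
    obtain ⟨s, hs, hD, hle⟩ := (hK _).1 hmK
    rw [hf]
    have e1 : C a + s • (C h + π 0) = C (a + s • h) := by simp
    simp only [e1] at hD hle
    have := (hmin _ hD).trans hle
    rw [map_smul, smul_eq_mul] at this
    simp only
    nlinarith
  have hdense : ∀ y, ∃ m : f.domain, (m : Z × F × ℝ) + y ∈ K := by
    rintro ⟨h, d, r⟩
    obtain ⟨v, hv, _, ⟨k, rfl⟩, hvk⟩ := Submodule.mem_sup.1 (hπW d)
    obtain ⟨ε, hε, hεD⟩ := hri v hv
    refine ⟨⟨(-h - k + ε⁻¹ • (a0 - a), 0, (G (C a0 + ε • v) - G (C a)) / ε - r), (hS _).2 rfl⟩,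
      (hK _).2 ⟨ε, hε, ?_⟩⟩
    have e1 : C a + ε • (C (-h - k + ε⁻¹ • (a0 - a) + h) + π (0 + d)) = C a0 + ε • v := by
      rw [zero_add, ← hvk, map_add, map_add, map_sub, map_smul, map_neg, map_sub]
      have : ε • ε⁻¹ • (C a0 - C a) = C a0 - C a := by
        rw [smul_smul, mul_inv_cancel₀ hε.ne', one_smul]
      simp only [smul_add, smul_sub, smul_neg] at this ⊢
      rw [this]
      abel
    simp only [Prod.mk_add_mk]
    rw [e1]
    refine ⟨hεD, le_of_eq ?_⟩
    field_simp
    ring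
  obtain ⟨ψ, hψf, hψK⟩ := riesz_extension K f hnonneg hdense
  have hψ : ∀ h d r, ψ (h, d, r) = r - c h + ψ (0, d, 0) := fun h d r => by
    have h1 := hψf ⟨(h, 0, r), (hS _).2 rfl⟩
    rw [hf] at h1
    simp only at h1
    rw [← h1, ← map_add]
    simp
  refine ⟨-(ψ ∘ₗ LinearMap.inr ℝ Z (F × ℝ) ∘ₗ LinearMap.inl ℝ F ℝ), fun h => ?_, fun z hz => ?_⟩
  · have h1 : ∀ h, 0 ≤ ψ (h, -C h, 0) := fun h => hψK _ ((hK _).2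
      ⟨1, one_pos, by simpa [hπid _ (hCW h)] using ha, by simp [hπid _ (hCW h)]⟩)
    have h2 := h1 h
    have h3 := h1 (-h)
    have h4 : ψ (0, -C h, 0) = -ψ (0, C h, 0) := by
      rw [show ((0 : Z), -C h, (0 : ℝ)) = -(0, C h, 0) by simp, map_neg]
    rw [hψ, h4] at h2
    rw [hψ, map_neg, map_neg, neg_neg] at h3
    simp only [LinearMap.neg_apply, LinearMap.comp_apply, LinearMap.inl_apply,
      LinearMap.inr_apply]
    linarith
  · have hzW : z - C a ∈ W := by
      have : z - C a = (z - C a0) + C (a0 - a) := by rw [map_sub]; abel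
      rw [this]
      exact W.add_mem (Submodule.mem_sup_left (hV z hz)) (hCW _)
    have h1 := hψK (0, z - C a, G z - G (C a)) ((hK _).2
      ⟨1, one_pos, by simpa [hπid _ hzW] using hz, by simp [hπid _ hzW]⟩)
    rw [hψ, map_zero] at h1
    simp only [LinearMap.neg_apply, LinearMap.comp_apply, LinearMap.inl_apply,
      LinearMap.inr_apply]
    linarith

/-- A point of the intrinsic interior can be moved inside the set along every direction of the
affine span. -/
lemma exists_forall_mem_of_mem_intrinsicInterior {E : Type*} [NormedAddCommGroup E]
    [InnerProductSpace ℝ E] {D : Set E} {z d : E} (hz : z ∈ intrinsicInterior ℝ D)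
    (hd : d ∈ (affineSpan ℝ D).direction) :
    ∃ ε : ℝ, 0 < ε ∧ ∀ t : ℝ, 0 ≤ t → t ≤ ε → z + t • d ∈ D := by
  obtain ⟨y, hy, rfl⟩ := mem_intrinsicInterior.1 hz
  let f : ℝ → affineSpan ℝ D := fun t => ⟨t • d +ᵥ (y : E),
    AffineSubspace.vadd_mem_of_mem_direction (Submodule.smul_mem _ t hd) y.2⟩
  have hf : Continuous f := by
    refine Continuous.subtype_mk ?_ _
    simp only [vadd_eq_add]
    fun_prop
  have hf0 : f 0 = y := by simp [f]
  have hnhds : f ⁻¹' ((↑) ⁻¹' D : Set (affineSpan ℝ D)) ∈ 𝓝 (0 : ℝ) :=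
    hf.continuousAt.preimage_mem_nhds (by rw [hf0]; exact mem_interior_iff_mem_nhds.1 hy)
  obtain ⟨ε, hε, hball⟩ := Metric.mem_nhds_iff.1 hnhds
  refine ⟨ε / 2, by positivity, fun t ht0 ht => ?_⟩
  have : f t ∈ ((↑) ⁻¹' D : Set (affineSpan ℝ D)) := hball (by
    rw [Metric.mem_ball, dist_zero_right, Real.norm_of_nonneg ht0]; linarith)
  simpa [f, add_comm] using this

section Conj

variable {E : Type*} [NormedAddCommGroup E] [InnerProductSpace ℝ E] {p : E → EReal}

/-- The Fenchel–Young inequality, with `p x` replaced by any real upper bound. -/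
lemma le_fenchelConj {x : E} {r : ℝ} (h : p x ≤ r) (y : E) :
    ((⟪y, x⟫ - r : ℝ) : EReal) ≤ fenchelConj p y := by
  refine le_trans ?_ (le_iSup (fun x : E => ((⟪y, x⟫ : ℝ) : EReal) - p x) x)
  rw [EReal.coe_sub]
  exact EReal.sub_le_sub le_rfl h

lemma fenchelConj_le (hp : ProperConvexLsc p) {y : E} {m : ℝ}
    (h : ∀ (x : E) (r : ℝ), p x ≤ r → ⟪y, x⟫ - r ≤ m) : fenchelConj p y ≤ m := by
  refine iSup_le fun x => ?_
  by_cases hx : p x = ⊤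
  · simp [hx]
  · have hr := EReal.coe_toReal hx (hp.1 x)
    rw [← hr, ← EReal.coe_sub, EReal.coe_le_coe_iff]
    exact h x _ hr.ge

lemma exists_le_coe (hp : ProperConvexLsc p) : ∃ (x : E) (r : ℝ), p x ≤ r := by
  obtain ⟨x, hx⟩ := hp.2.1
  exact ⟨x, _, (EReal.coe_toReal hx (hp.1 x)).ge⟩

lemma fenchelConj_ne_bot (hp : ProperConvexLsc p) (y : E) : fenchelConj p y ≠ ⊥ := by
  intro hbot
  obtain ⟨x, r, hx⟩ := exists_le_coe hp
  have := le_fenchelConj hx y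
  rw [hbot, le_bot_iff] at this
  exact EReal.coe_ne_bot _ this

lemma coe_conj (hp : ProperConvexLsc p) {y : E} (hy : fenchelConj p y ≠ ⊤) :
    ((fenchelConj p y).toReal : EReal) = fenchelConj p y :=
  EReal.coe_toReal hy (fenchelConj_ne_bot hp y)

lemma le_conj_toReal (hp : ProperConvexLsc p) {x y : E} {r : ℝ} (h : p x ≤ r)
    (hy : fenchelConj p y ≠ ⊤) : ⟪y, x⟫ - r ≤ (fenchelConj p y).toReal := by
  rw [← EReal.coe_le_coe_iff, coe_conj hp hy]
  exact le_fenchelConj h y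

lemma conj_toReal_le (hp : ProperConvexLsc p) {y : E} {m : ℝ}
    (h : ∀ (x : E) (r : ℝ), p x ≤ r → ⟪y, x⟫ - r ≤ m) :
    fenchelConj p y ≠ ⊤ ∧ (fenchelConj p y).toReal ≤ m := by
  have hle := fenchelConj_le hp h
  have hne : fenchelConj p y ≠ ⊤ := ne_top_of_le_ne_top (EReal.coe_ne_top m) hle
  exact ⟨hne, by rwa [← EReal.coe_le_coe_iff, coe_conj hp hne]⟩

lemma convexOn_conj (hp : ProperConvexLsc p) :
    ConvexOn ℝ {y | fenchelConj p y ≠ ⊤} fun y => (fenchelConj p y).toReal := by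
  have key : ∀ y, fenchelConj p y ≠ ⊤ → ∀ y', fenchelConj p y' ≠ ⊤ → ∀ a c : ℝ,
      0 ≤ a → 0 ≤ c → a + c = 1 → fenchelConj p (a • y + c • y') ≠ ⊤ ∧
        (fenchelConj p (a • y + c • y')).toReal
          ≤ a * (fenchelConj p y).toReal + c * (fenchelConj p y').toReal := by
    intro y hy y' hy' a c ha hc hac
    refine conj_toReal_le hp fun x r hx => ?_
    have h1 := mul_le_mul_of_nonneg_left (le_conj_toReal hp hx hy) ha
    have h2 := mul_le_mul_of_nonneg_left (le_conj_toReal hp hx hy') hc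
    rw [inner_add_left, inner_smul_left, inner_smul_left]
    simp only [RCLike.conj_to_real]
    have : r = a * r + c * r := by rw [← add_mul, hac, one_mul]
    linarith
  exact ⟨fun y hy y' hy' a c ha hc hac => (key y hy y' hy' a c ha hc hac).1,
    fun y hy y' hy' a c ha hc hac => (key y hy y' hy' a c ha hc hac).2⟩

/-- The relation `s ∈ ∂p(z)` (equivalently `z ∈ ∂p*(s)`), as a set of pairs `(s, z)`. -/
def subgradRel (p : E → EReal) : Set (E × E) :=
  {m | ∀ x, p m.2 ≤ p x + ((⟪m.1, m.2 - x⟫ : ℝ) : EReal)}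

lemma subgradRel_ne_top (hp : ProperConvexLsc p) {s z : E} (h : (s, z) ∈ subgradRel p) :
    p z ≠ ⊤ := by
  obtain ⟨x, r, hx⟩ := exists_le_coe hp
  refine ne_top_of_le_ne_top (EReal.coe_ne_top (r + ⟪s, z - x⟫)) ((h x).trans ?_)
  rw [EReal.coe_add]
  exact add_le_add hx le_rfl

lemma subgradRel_mono (hp : ProperConvexLsc p) {s z s' z' : E} (h : (s, z) ∈ subgradRel p)
    (h' : (s', z') ∈ subgradRel p) : 0 ≤ ⟪z - z', s - s'⟫ := by
  have e := EReal.coe_toReal (subgradRel_ne_top hp h) (hp.1 z)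
  have e' := EReal.coe_toReal (subgradRel_ne_top hp h') (hp.1 z')
  have h1 := h z'
  have h2 := h' z
  simp only at h1 h2
  rw [← e, ← e', ← EReal.coe_add, EReal.coe_le_coe_iff] at h1 h2
  rw [real_inner_comm]
  simp only [inner_sub_left, inner_sub_right] at *
  linarith

lemma isClosed_subgradRel (hp : ProperConvexLsc p) : IsClosed (subgradRel p) := by
  have : subgradRel p = ⋂ (x : E) (r : ℝ) (_ : p x ≤ r),
      {m : E × E | (m.2, r + ⟪m.1, m.2 - x⟫) ∈ {q : E × ℝ | p q.1 ≤ (q.2 : EReal)}} := by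
    ext ⟨s, z⟩
    simp only [subgradRel, Set.mem_ofPred_eq, Set.mem_iInter]
    constructor
    · intro h x r hx
      rw [EReal.coe_add]
      exact (h x).trans (add_le_add hx le_rfl)
    · intro h x
      by_cases hx : p x = ⊤
      · simp [hx]
      · have hr := EReal.coe_toReal hx (hp.1 x)
        rw [← hr, ← EReal.coe_add]
        exact h x _ hr.ge
  rw [this]
  refine isClosed_iInter fun x => isClosed_iInter fun r => isClosed_iInter fun _ => ?_
  have hepi : IsClosed {q : E × ℝ | p q.1 ≤ (q.2 : EReal)} :=
    hp.2.2.1.isClosed_epigraph.preimage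
      (continuous_fst.prodMk (continuous_coe_real_ereal.comp continuous_snd))
  exact hepi.preimage (by fun_prop)

/-- Fenchel–Moreau in the form `z ∈ ∂p*(s) → s ∈ ∂p(z)`: the point `(z, ⟪s, z⟫ - p*(s))` cannot
be separated from the epigraph of `p`. -/
lemma mem_subgradRel_of_conj [FiniteDimensional ℝ E] (hp : ProperConvexLsc p) {s z : E}
    (hs : fenchelConj p s ≠ ⊤)
    (h : ∀ y, fenchelConj p y ≠ ⊤ →
      (fenchelConj p s).toReal + ⟪z, y - s⟫ ≤ (fenchelConj p y).toReal) :
    (s, z) ∈ subgradRel p := by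
  suffices hle : p z ≤ ((⟪s, z⟫ - (fenchelConj p s).toReal : ℝ) : EReal) by
    intro x
    by_cases hx : p x = ⊤
    · simp [hx]
    have hr := EReal.coe_toReal hx (hp.1 x)
    refine hle.trans ?_
    simp only
    rw [← hr, ← EReal.coe_add, EReal.coe_le_coe_iff, inner_sub_right]
    have := le_conj_toReal hp hr.ge hs
    linarith
  by_contra hlt
  have hconv : Convex ℝ {q : E × ℝ | p q.1 ≤ (q.2 : EReal)} := by
    rintro ⟨x, r⟩ hx ⟨x', r'⟩ hx' a c ha hc hac
    simp only [Set.mem_ofPred_eq, Prod.smul_mk, Prod.mk_add_mk, smul_eq_mul] at *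
    refine (hp.2.2.2 x x' a c ha hc hac).trans ?_
    rw [EReal.coe_add, EReal.coe_mul, EReal.coe_mul]
    exact add_le_add (mul_le_mul_of_nonneg_left hx (by exact_mod_cast ha))
      (mul_le_mul_of_nonneg_left hx' (by exact_mod_cast hc))
  have hepi : IsClosed {q : E × ℝ | p q.1 ≤ (q.2 : EReal)} :=
    hp.2.2.1.isClosed_epigraph.preimage
      (continuous_fst.prodMk (continuous_coe_real_ereal.comp continuous_snd))
  set c := ⟪s, z⟫ - (fenchelConj p s).toReal with hc
  obtain ⟨f, m, hfm, hf⟩ := geometric_hahn_banach_point_closed hconv hepi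
    (x := (z, c)) hlt
  -- Write the separating functional as `(x, r) ↦ ⟪g, x⟫ + κ r`.
  have : CompleteSpace E := FiniteDimensional.complete ℝ E
  set g : E := (InnerProductSpace.toDual ℝ E).symm (f.comp (ContinuousLinearMap.inl ℝ E ℝ)) with hg
  set κ : ℝ := f (0, 1) with hκ
  have hfg : ∀ x r, f (x, r) = ⟪g, x⟫ + κ * r := fun x r => by
    have e1 : (x, r) = ContinuousLinearMap.inl ℝ E ℝ x + r • ((0, 1) : E × ℝ) := by simp
    rw [e1, map_add, map_smul, hg, InnerProductSpace.toDual_symm_apply]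
    simp [hκ, mul_comm]
  rw [hfg] at hfm
  have hf' : ∀ (x : E) (r : ℝ), p x ≤ r → m < ⟪g, x⟫ + κ * r := fun x r hx => by
    rw [← hfg]; exact hf (x, r) hx
  have hκ0 : 0 ≤ κ := by
    by_contra! hneg
    obtain ⟨x, r, hx⟩ := exists_le_coe hp
    have hr : r ≤ max r ((m - ⟪g, x⟫) / κ) := le_max_left _ _
    have h1 := hf' x (max r ((m - ⟪g, x⟫) / κ)) (hx.trans (by exact_mod_cast hr))
    have h2 := mul_le_mul_of_nonpos_left (le_max_right r ((m - ⟪g, x⟫) / κ)) hneg.le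
    rw [mul_div_cancel₀ _ hneg.ne] at h2
    linarith
  rcases hκ0.eq_or_lt with h0 | hpos
  · -- A vertical hyperplane: tilt `s` in the direction `-g`.
    obtain ⟨hne, hle⟩ := conj_toReal_le hp (y := s - g) (m := (fenchelConj p s).toReal - m)
      fun x r hx => by
        have h1 := hf' x r hx
        have h2 := le_conj_toReal hp hx hs
        rw [← h0, zero_mul, add_zero] at h1
        rw [inner_sub_left]
        linarith
    have h3 := h _ hne
    rw [sub_sub_cancel_left, inner_neg_right, real_inner_comm] at h3
    rw [← h0, zero_mul, add_zero] at hfm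
    linarith
  · -- A nonvertical hyperplane is an affine minorant of `p` with slope `-g / κ`.
    obtain ⟨hne, hle⟩ := conj_toReal_le hp (y := -(κ⁻¹ • g)) (m := -(κ⁻¹ * m))
      fun x r hx => by
        have h1 := mul_le_mul_of_nonneg_left (hf' x r hx).le (inv_pos.2 hpos).le
        rw [mul_add, ← mul_assoc, inv_mul_cancel₀ hpos.ne'] at h1
        rw [inner_neg_left, inner_smul_left]
        simp only [RCLike.conj_to_real]
        linarith
    have h3 := h _ hne
    have h4 := mul_lt_mul_of_pos_left hfm (inv_pos.2 hpos)
    rw [mul_add, ← mul_assoc, inv_mul_cancel₀ hpos.ne'] at h4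
    rw [inner_sub_right, inner_neg_right, inner_smul_right, real_inner_comm g z,
      real_inner_comm s z] at h3
    linarith

/-- The optimality condition of the proximal step for `p*`. -/
lemma mem_subgradRel_of_isProx [FiniteDimensional ℝ E] (hp : ProperConvexLsc p)
    (hdom : ∃ y, fenchelConj p y ≠ ⊤) {σ : ℝ} (hσ : 0 < σ) {ξ s : E}
    (h : IsProx (fenchelConj p) σ⁻¹ ξ s) : (s, σ • (ξ - s)) ∈ subgradRel p := by
  have hc : 1 / (2 * σ⁻¹) = σ / 2 := by field_simp
  have hs : fenchelConj p s ≠ ⊤ := by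
    obtain ⟨y, hy⟩ := hdom
    intro htop
    have := h y
    rw [htop, EReal.top_add_coe, top_le_iff, ← coe_conj hp hy, ← EReal.coe_add] at this
    exact EReal.coe_ne_top _ this
  refine mem_subgradRel_of_conj hp hs fun y hy => ?_
  suffices 0 ≤ (fenchelConj p y).toReal - (fenchelConj p s).toReal - ⟪σ • (ξ - s), y - s⟫ by
    linarith
  refine nonneg_of_forall_small (c := σ / 2 * ‖y - s‖ ^ 2) fun t ht0 ht1 => ?_
  have hcv := (convexOn_conj hp).2 hs hy (sub_nonneg.2 ht1) ht0.le (by ring)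
  have hcd := (convexOn_conj hp).1 hs hy (sub_nonneg.2 ht1) ht0.le (by ring)
  have h1 := h ((1 - t) • s + t • y)
  rw [← coe_conj hp hs, ← coe_conj hp hcd, ← EReal.coe_add, ← EReal.coe_add,
    EReal.coe_le_coe_iff, hc] at h1
  have e1 : (1 - t) • s + t • y - ξ = (s - ξ) + t • (y - s) := by module
  rw [e1, norm_add_sq_real, inner_smul_right, norm_smul, mul_pow, Real.norm_eq_abs, sq_abs] at h1
  have e2 : ⟪σ • (ξ - s), y - s⟫ = -(σ * ⟪s - ξ, y - s⟫) := by
    rw [inner_smul_left, ← neg_sub s ξ, inner_neg_left]; simp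
  rw [e2]
  simp only [smul_eq_mul] at hcv
  nlinarith

end Conj

/-! ### Optimality conditions for the primal–dual pair -/

section Duality

variable {X Y Z : Type*}
  [NormedAddCommGroup X] [InnerProductSpace ℝ X] [FiniteDimensional ℝ X]
  [NormedAddCommGroup Y] [InnerProductSpace ℝ Y] [FiniteDimensional ℝ Y]
  [NormedAddCommGroup Z] [InnerProductSpace ℝ Z] [FiniteDimensional ℝ Z]

/-- At a dual optimal `u`, the constraint qualification yields multipliers `(x, y)` solving the
Karush–Kuhn–Tucker system. -/
lemma exists_kkt (A : X →ₗ[ℝ] Z) (B : Y →ₗ[ℝ] Z) (b : Z) {p : X → EReal} {q : Y → EReal}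
    (hp : ProperConvexLsc p) (hq : ProperConvexLsc q) {m : Z × X × Y}
    (hm : isDualOptimal A B b p q m) {u₀ : Z}
    (h₁ : -(LinearMap.adjoint A u₀) ∈ intrinsicInterior ℝ {v : X | fenchelConj p v ≠ ⊤})
    (h₂ : -(LinearMap.adjoint B u₀) ∈ intrinsicInterior ℝ {w : Y | fenchelConj q w ≠ ⊤}) :
    ∃ x y, A x + B y = m.1 + b ∧ (m.2.1, x) ∈ subgradRel p ∧ (m.2.2, y) ∈ subgradRel q := by
  obtain ⟨u, v, w⟩ := m
  obtain ⟨⟨hv, hw⟩, hopt⟩ := hm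
  simp only at hv hw
  subst hv hw
  set D₁ := {v : X | fenchelConj p v ≠ ⊤} with hD₁
  set D₂ := {w : Y | fenchelConj q w ≠ ⊤} with hD₂
  set P : X → ℝ := fun v => (fenchelConj p v).toReal with hP
  set Q : Y → ℝ := fun w => (fenchelConj q w).toReal with hQ
  set C : Z →ₗ[ℝ] X × Y := (-LinearMap.adjoint A).prod (-LinearMap.adjoint B) with hC
  have hC1 : ∀ h, (C h).1 = -LinearMap.adjoint A h := fun h => rfl
  have hC2 : ∀ h, (C h).2 = -LinearMap.adjoint B h := fun h => rfl
  set G : X × Y → ℝ := fun z => P z.1 + Q z.2 with hG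
  have hconv : ConvexOn ℝ (D₁ ×ˢ D₂) G := by
    have hp' := convexOn_conj hp
    have hq' := convexOn_conj hq
    refine ⟨hp'.1.prod hq'.1, fun z hz z' hz' a c ha hc hac => ?_⟩
    have i1 := hp'.2 hz.1 hz'.1 ha hc hac
    have i2 := hq'.2 hz.2 hz'.2 ha hc hac
    simp only [hG, hP, hQ, smul_eq_mul, Prod.fst_add, Prod.snd_add, Prod.smul_fst,
      Prod.smul_snd] at *
    linarith
  have hobj : ∀ u', C u' ∈ D₁ ×ˢ D₂ → dualObj b p q (u', (C u').1, (C u').2)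
      = ((1 / 2 * ‖u'‖ ^ 2 + ⟪u', b⟫ + G (C u') : ℝ) : EReal) := fun u' hu' => by
    simp only [dualObj, hG, hP, hQ]
    rw [EReal.coe_add _ (_ + _), EReal.coe_add (EReal.toReal _), coe_conj hp hu'.1,
      coe_conj hq hu'.2, add_assoc]
  have hopt' : ∀ u', dualObj b p q (u, (C u).1, (C u).2)
      ≤ dualObj b p q (u', (C u').1, (C u').2) := fun u' => hopt (u', C u') ⟨rfl, rfl⟩
  have hu₀ : C u₀ ∈ D₁ ×ˢ D₂ := ⟨intrinsicInterior_subset h₁, intrinsicInterior_subset h₂⟩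
  have hu : C u ∈ D₁ ×ˢ D₂ := by
    have hle := hopt' u₀
    rw [hobj _ hu₀] at hle
    have hne := ne_top_of_le_ne_top (EReal.coe_ne_top _) hle
    constructor
    · intro htop
      apply hne
      simp only [dualObj, htop, EReal.coe_add_top]
      exact EReal.top_add_of_ne_bot (fenchelConj_ne_bot hq _)
    · intro htop
      apply hne
      simp only [dualObj, htop]
      refine EReal.add_top_of_ne_bot ?_
      rw [Ne, EReal.add_eq_bot_iff, not_or]
      exact ⟨EReal.coe_ne_bot _, fenchelConj_ne_bot hp _⟩
  -- The smooth part of the objective may be replaced by its linearization at `u`.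
  have hmin : ∀ h, C (u + h) ∈ D₁ ×ˢ D₂ → G (C u) + (-innerₗ Z (u + b)) h ≤ G (C (u + h)) := by
    intro h hh
    suffices 0 ≤ ⟪u + b, h⟫ + G (C (u + h)) - G (C u) by
      simp only [LinearMap.neg_apply, innerₗ_apply_apply]
      linarith
    refine nonneg_of_forall_small (c := 1 / 2 * ‖h‖ ^ 2) fun t ht0 ht1 => ?_
    have e1 : C (u + t • h) = (1 - t) • C u + t • C (u + h) := by
      simp only [map_add, map_smul]; module
    have hD := hconv.1 hu hh (sub_nonneg.2 ht1) ht0.le (by ring)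
    have hle := hconv.2 hu hh (sub_nonneg.2 ht1) ht0.le (by ring)
    rw [← e1] at hD hle
    have ho := hopt' (u + t • h)
    rw [hobj _ hu, hobj _ hD, EReal.coe_le_coe_iff, norm_add_sq_real, norm_smul, mul_pow,
      Real.norm_eq_abs, sq_abs, inner_add_left, inner_smul_left, inner_smul_right,
      real_inner_comm b h] at ho
    simp only [smul_eq_mul, RCLike.conj_to_real] at hle ho
    rw [inner_add_left]
    linarith
  obtain ⟨e, heC, heG⟩ := exists_multiplier C (-innerₗ Z (u + b)) hconv u hu hmin u₀
    ((affineSpan ℝ D₁).direction.prod (affineSpan ℝ D₂).direction)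
    (fun z hz => ⟨AffineSubspace.vsub_mem_direction (subset_affineSpan ℝ _ hz.1)
        (subset_affineSpan ℝ _ hu₀.1),
      AffineSubspace.vsub_mem_direction (subset_affineSpan ℝ _ hz.2)
        (subset_affineSpan ℝ _ hu₀.2)⟩)
    (fun d hd => by
      obtain ⟨ε, hε, hε'⟩ := exists_forall_mem_of_mem_intrinsicInterior h₁ hd.1
      obtain ⟨δ, hδ, hδ'⟩ := exists_forall_mem_of_mem_intrinsicInterior h₂ hd.2
      have h0 : 0 < min ε δ := lt_min hε hδ
      exact ⟨min ε δ, h0, hε' _ h0.le (min_le_left _ _), hδ' _ h0.le (min_le_right _ _)⟩)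
  have : CompleteSpace X := FiniteDimensional.complete ℝ X
  have : CompleteSpace Y := FiniteDimensional.complete ℝ Y
  set x : X := (InnerProductSpace.toDual ℝ X).symm
    (LinearMap.toContinuousLinearMap (e ∘ₗ LinearMap.inl ℝ X Y)) with hx
  set y : Y := (InnerProductSpace.toDual ℝ Y).symm
    (LinearMap.toContinuousLinearMap (e ∘ₗ LinearMap.inr ℝ X Y)) with hy
  have he : ∀ d, e d = ⟪x, d.1⟫ + ⟪y, d.2⟫ := fun d => by
    rw [hx, hy, InnerProductSpace.toDual_symm_apply, InnerProductSpace.toDual_symm_apply]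
    simp only [LinearMap.coe_toContinuousLinearMap', LinearMap.comp_apply, ← map_add]
    simp
  refine ⟨x, y, ?_, ?_, ?_⟩
  · refine ext_inner_right ℝ fun h => ?_
    have h1 := heC h
    rw [he, hC1, hC2, inner_neg_right, inner_neg_right, LinearMap.adjoint_inner_right,
      LinearMap.adjoint_inner_right] at h1
    simp only [LinearMap.neg_apply, innerₗ_apply_apply] at h1
    rw [inner_add_left]
    linarith
  · refine mem_subgradRel_of_conj hp hu.1 fun v' hv' => ?_
    have h1 := heG (v', (C u).2) ⟨hv', hu.2⟩
    rw [he] at h1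
    simp only [hG, Prod.fst_sub, Prod.snd_sub, sub_self, inner_zero_right] at h1
    simp only [hP] at h1
    rw [hC1] at h1
    linarith
  · refine mem_subgradRel_of_conj hq hu.2 fun w' hw' => ?_
    have h1 := heG ((C u).1, w') ⟨hu.1, hw'⟩
    rw [he] at h1
    simp only [hG, Prod.fst_sub, Prod.snd_sub, sub_self, inner_zero_right] at h1
    simp only [hQ] at h1
    rw [hC2] at h1
    linarith


/-- A solution of the Karush–Kuhn–Tucker system is primal optimal. -/
lemma primal_optimal (A : X →ₗ[ℝ] Z) (B : Y →ₗ[ℝ] Z) (b : Z) {p : X → EReal} {q : Y → EReal}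
    (hp : ProperConvexLsc p) (hq : ProperConvexLsc q) {u : Z} {x : X} {y : Y}
    (h : A x + B y = u + b) (hx : (-(LinearMap.adjoint A u), x) ∈ subgradRel p)
    (hy : (-(LinearMap.adjoint B u), y) ∈ subgradRel q) (m : X × Y) :
    primalObj A B b p q (x, y) ≤ primalObj A B b p q m := by
  obtain ⟨x', y'⟩ := m
  by_cases hx' : p x' = ⊤
  · simp only [primalObj, hx', EReal.coe_add_top, EReal.top_add_of_ne_bot (hq.1 _), le_top]
  by_cases hy' : q y' = ⊤
  · have : ((1 / 2 * ‖A x' + B y' - b‖ ^ 2 : ℝ) : EReal) + p x' ≠ ⊥ := by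
      rw [Ne, EReal.add_eq_bot_iff, not_or]
      exact ⟨EReal.coe_ne_bot _, hp.1 _⟩
    simp only [primalObj, hy', EReal.add_top_of_ne_bot this, le_top]
  have i1 := hx x'
  have i2 := hy y'
  simp only [primalObj] at *
  rw [← EReal.coe_toReal hx' (hp.1 _), ← EReal.coe_toReal (subgradRel_ne_top hp hx) (hp.1 _),
    ← EReal.coe_add, EReal.coe_le_coe_iff] at i1
  rw [← EReal.coe_toReal hy' (hq.1 _), ← EReal.coe_toReal (subgradRel_ne_top hq hy) (hq.1 _),
    ← EReal.coe_add, EReal.coe_le_coe_iff] at i2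
  rw [← EReal.coe_toReal hx' (hp.1 _), ← EReal.coe_toReal (subgradRel_ne_top hp hx) (hp.1 _),
    ← EReal.coe_toReal hy' (hq.1 _), ← EReal.coe_toReal (subgradRel_ne_top hq hy) (hq.1 _)]
  simp only [← EReal.coe_add, EReal.coe_le_coe_iff]
  have e1 : A x + B y - b = u := by rw [h]; abel
  have e2 : A x' + B y' - b = u - (A (x - x') + B (y - y')) := by
    rw [← e1]; simp only [map_sub]; abel
  rw [e1, e2, norm_sub_sq_real, inner_add_right]
  rw [inner_neg_left, LinearMap.adjoint_inner_left] at i1 i2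
  have : 0 ≤ ‖A (x - x') + B (y - y')‖ ^ 2 := by positivity
  linarith

end Duality

lemma prox_point_eq {F : Type*} [AddCommGroup F] [Module ℝ F] {σ : ℝ} (hσ : σ ≠ 0) (τ : ℝ)
    (a c d : F) :
    σ • (σ⁻¹ • a - c - d) = a + (τ * σ) • (-c - d) + ((1 - τ) * σ) • (-c - d) := by
  rw [sub_sub, smul_sub, smul_smul, mul_inv_cancel₀ hσ]
  module

/-! ### The dual ADMM -/

/-- **Global convergence of the dual ADMM.** If the dual problem (D) has an
optimal solution, the constraint qualification holds, `σ > 0`,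
`τ ∈ (0, (1+√5)/2)`, and `(uᵏ,vᵏ,wᵏ,xᵏ,yᵏ)` follows the dual ADMM recursion,
then `(uᵏ,vᵏ,wᵏ)` converges to an optimal solution of (D) and `(xᵏ,yᵏ)`
converges to a minimizer of `F(x,y) = (1/2)‖Ax + By − b‖² + p(x) + q(y)`. -/
theorem dADMM_global_convergence
    (A : 𝒳 →ₗ[ℝ] 𝒵) (B : 𝒴 →ₗ[ℝ] 𝒵) (b : 𝒵)
    (p : 𝒳 → EReal) (hp : ProperConvexLsc p)
    (q : 𝒴 → EReal) (hq : ProperConvexLsc q)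
    (σ τ : ℝ) (hσ : 0 < σ) (hτ0 : 0 < τ) (hτ1 : τ < (1 + Real.sqrt 5) / 2)
    (hsol : ∃ m : 𝒵 × 𝒳 × 𝒴, isDualOptimal A B b p q m)
    (hCQ : ∃ u : 𝒵,
      -(LinearMap.adjoint A u) ∈
          intrinsicInterior ℝ {v : 𝒳 | fenchelConj p v ≠ ⊤} ∧
      -(LinearMap.adjoint B u) ∈
          intrinsicInterior ℝ {w : 𝒴 | fenchelConj q w ≠ ⊤})
    (u : ℕ → 𝒵) (v : ℕ → 𝒳) (w : ℕ → 𝒴) (x : ℕ → 𝒳) (y : ℕ → 𝒴)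
    (hu : ∀ k : ℕ,
      u (k + 1) + σ • A (LinearMap.adjoint A (u (k + 1)))
          + σ • B (LinearMap.adjoint B (u (k + 1)))
        = A (x k) + B (y k) - b - σ • A (v k) - σ • B (w k))
    (hv : ∀ k : ℕ,
      IsProx (fenchelConj p) σ⁻¹
        (σ⁻¹ • x k - LinearMap.adjoint A (u (k + 1))) (v (k + 1)))
    (hw : ∀ k : ℕ,
      IsProx (fenchelConj q) σ⁻¹
        (σ⁻¹ • y k - LinearMap.adjoint B (u (k + 1))) (w (k + 1)))
    (hx : ∀ k : ℕ,
      x (k + 1) = x k + (τ * σ) • (-(LinearMap.adjoint A (u (k + 1))) - v (k + 1)))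
    (hy : ∀ k : ℕ,
      y (k + 1) = y k + (τ * σ) • (-(LinearMap.adjoint B (u (k + 1))) - w (k + 1))) :
    (∃ mstar : 𝒵 × 𝒳 × 𝒴, isDualOptimal A B b p q mstar ∧
      Tendsto (fun k => (u k, v k, w k)) atTop (𝓝 mstar)) ∧
    (∃ xystar : 𝒳 × 𝒴,
      (∀ m : 𝒳 × 𝒴, primalObj A B b p q xystar ≤ primalObj A B b p q m) ∧
      Tendsto (fun k => (x k, y k)) atTop (𝓝 xystar)) := by
  obtain ⟨m, hm⟩ := hsol
  obtain ⟨u₀, h₁, h₂⟩ := hCQ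
  obtain ⟨xs, ys, hK, hxs, hys⟩ := exists_kkt A B b hp hq hm h₁ h₂
  have hfeas := hm.1
  have hτ : τ ^ 2 < 1 + τ := by
    have h5 : √5 ^ 2 = 5 := Real.sq_sqrt (by norm_num)
    have h1 : 1 < √5 := Real.lt_sqrt_of_sq_lt (by norm_num)
    have := mul_pos (sub_pos.2 hτ1) (show 0 < τ - (1 - √5) / 2 by linarith)
    linarith
  -- The two dual blocks `v`, `w` are merged into one, living in the Hilbert sum `𝒳 ⊕ 𝒴`.
  let L := WithLp.linearEquiv 2 ℝ (𝒳 × 𝒴)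
  let T : 𝒵 →ₗ[ℝ] WithLp 2 (𝒳 × 𝒴) :=
    L.symm.toLinearMap ∘ₗ (-LinearMap.adjoint A).prod (-LinearMap.adjoint B)
  let T' : WithLp 2 (𝒳 × 𝒴) →ₗ[ℝ] 𝒵 := -(A.coprod B) ∘ₗ L.toLinearMap
  have hTa : ∀ u, T u = WithLp.toLp 2 (-LinearMap.adjoint A u, -LinearMap.adjoint B u) :=
    fun u => rfl
  have hTa' : ∀ z : WithLp 2 (𝒳 × 𝒴), T' z = -(A z.fst + B z.snd) := fun z => rfl
  have hT : ∀ u z, ⟪T u, z⟫ = ⟪u, T' z⟫ := fun u z => by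
    rw [hTa, hTa', WithLp.prod_inner_apply, inner_neg_right, inner_add_right,
      ← LinearMap.adjoint_inner_left, ← LinearMap.adjoint_inner_left]
    simp only [inner_neg_left]
    change -⟪_, z.fst⟫ + -⟪_, z.snd⟫ = _
    ring
  let M : Set (WithLp 2 (𝒳 × 𝒴) × WithLp 2 (𝒳 × 𝒴)) :=
    {n | (n.1.fst, n.2.fst) ∈ subgradRel p ∧ (n.1.snd, n.2.snd) ∈ subgradRel q}
  have hMc : IsClosed M :=
    ((isClosed_subgradRel hp).preimage (by fun_prop)).inter
      ((isClosed_subgradRel hq).preimage (by fun_prop))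
  have hMm : ∀ s z s' z', (s, z) ∈ M → (s', z') ∈ M → 0 ≤ ⟪z - z', s - s'⟫ :=
    fun s z s' z' h h' => by
      rw [WithLp.prod_inner_apply]
      exact add_nonneg (subgradRel_mono hp h.1 h'.1) (subgradRel_mono hq h.2 h'.2)
  have hpd : ∃ y, fenchelConj p y ≠ ⊤ := ⟨_, intrinsicInterior_subset h₁⟩
  have hqd : ∃ y, fenchelConj q y ≠ ⊤ := ⟨_, intrinsicInterior_subset h₂⟩
  -- The proximal steps give subgradient information from index `1` on, hence the shift.
  have key := admm_abstract T T' hT b M hMc hMm hσ hτ0 hτ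
    (fun k => u (k + 1)) (fun k => WithLp.toLp 2 (v (k + 1), w (k + 1)))
    (fun k => WithLp.toLp 2 (x (k + 1), y (k + 1))) ?_ ?_ ?_ m.1 (WithLp.toLp 2 (xs, ys)) ?_ ?_
  · obtain ⟨hu', hs', z', hz', hMz, hKz⟩ := key
    rw [hTa] at hs' hMz
    have hc : Continuous (WithLp.ofLp : WithLp 2 (𝒳 × 𝒴) → 𝒳 × 𝒴) := by fun_prop
    refine ⟨⟨m, hm, ?_⟩, ⟨z'.ofLp, fun n => ?_, ?_⟩⟩
    · rw [← tendsto_add_atTop_iff_nat 1]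
      have h := hu'.prodMk_nhds ((hc.tendsto _).comp hs')
      rw [hfeas.1, hfeas.2] at h
      exact h
    · refine primal_optimal A B b hp hq (u := m.1) ?_ hMz.1 hMz.2 n
      rw [hTa'] at hKz
      exact (add_neg_eq_zero.1 hKz).symm
    · rw [← tendsto_add_atTop_iff_nat 1]
      exact (hc.tendsto _).comp hz'
  · intro k
    have h := hu (k + 1)
    rw [hTa', hTa]
    change u (k + 1 + 1) + b
      + -(A (x (k + 1) + σ • (-LinearMap.adjoint A (u (k + 1 + 1)) - v (k + 1)))
        + B (y (k + 1) + σ • (-LinearMap.adjoint B (u (k + 1 + 1)) - w (k + 1)))) = 0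
    simp only [map_add, map_smul, map_sub, map_neg]
    rw [← sub_eq_zero] at h
    rw [← h]
    module
  · intro k
    have h := mem_subgradRel_of_isProx hp hpd hσ (hv k)
    have h' := mem_subgradRel_of_isProx hq hqd hσ (hw k)
    rw [prox_point_eq hσ.ne' τ, ← hx] at h
    rw [prox_point_eq hσ.ne' τ, ← hy] at h'
    exact ⟨h, h'⟩
  · intro k
    rw [hTa]
    simp only [hx (k + 1), hy (k + 1)]
    rfl
  · rw [hTa']
    exact add_neg_eq_zero.2 hK.symm
  · rw [hTa, hfeas.1, hfeas.2]
    exact ⟨hxs, hys⟩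
end
end

section
/- Local linear convergence of the dual ADMM. Let M = 𝒵×𝒳×𝒴×𝒳×𝒴 and define R : M → M by R(u,v,w,x,y) = (u + b − Ax − By, v − Prox_{p*}(v + x), w − Prox_{q*}(w + y), −A*u − v, −B*u − w). Let Ω̄ = {m ∈ M : R(m) = 0} be the set of KKT points; assume Ω̄ is nonempty and that R is piecewise polyhedral, i.e., the graph of R is the union of finitely many polyhedral sets (each a solution set of finitely many affine inequalities). Let σ > 0, τ ∈ (0, (1+√5)/2), set s_τ = (5 − τ − 3·min{τ, τ⁻¹})/4, let Γ* : M → 𝒳×𝒴 be the linear map Γ*(u,v,w,x,y) = (−A*u − v, −B*u − w) with Γ its adjoint, and define the self-adjoint positive definite operator 𝒫 = Diag(I_𝒵, σ I_{𝒳×𝒴}, (τσ)⁻¹ I_{𝒳×𝒴}) + s_τ σ Γ Γ* on M, with ‖m‖_𝒫 = √⟨m, 𝒫m⟩ and dist_𝒫(m, Ω) = inf_{ω∈Ω} ‖m − ω‖_𝒫. Let (mᵏ)_{k≥0} = (uᵏ, vᵏ, wᵏ, xᵏ, yᵏ)_{k≥0} be generated by the dual ADMM recursion: (I + σAA* + σBB*)u^{k+1}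 = Axᵏ + Byᵏ − b − σAvᵏ − σBwᵏ; v^{k+1} = Prox_{p*/σ}(xᵏ/σ − A*u^{k+1}); w^{k+1} = Prox_{q*/σ}(yᵏ/σ − B*u^{k+1}); x^{k+1} = xᵏ + τσ(−A*u^{k+1} − v^{k+1}); y^{k+1} = yᵏ + τσ(−B*u^{k+1} − w^{k+1}). Then there exist constants η̂ > 0 and μ̂ ∈ (0,1) such that for all k ≥ 1: dist(mᵏ, Ω̄) ≤ η̂ ‖R(mᵏ)‖ and dist_𝒫(m^{k+1}, Ω̄) ≤ μ̂ dist_𝒫(mᵏ, Ω̄). -/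
/-!
The potential argument is as follows. Fix a KKT point `m̄`, write `r` for the constraint residual
`Γ* m`, and let `Δv` be the change of the pair `(v, w)` in one step. The optimality of the
`u`-update and the monotonicity of `∂p*` and `∂q*`, used once between the new iterate and `m̄`
and once between two consecutive iterates, give
`‖m⁺ - m̄‖²_𝒫 + c (‖Δv‖² + ‖r⁺‖²) ≤ ‖m - m̄‖²_𝒫` (`exists_descent`); the value of `s_τ` is what
absorbs the cross term `⟪Δv, r⁺⟫`, and `τ` below the golden ratio is what makes `c > 0`
(`exists_step_scalar`). The comparison of consecutive iterates needs the old iterate to come from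
a proximal step as well, hence the restriction `k ≥ 1`. The KKT residual at the new iterate is
controlled by `‖Δv‖` and `‖r⁺‖` because proximal maps are nonexpansive (`exists_residual_le`).

Since the `𝒫`-distances to `m̄` decrease, the iterates stay bounded, and on a bounded set a map
with piecewise polyhedral graph satisfies `dist(m, R⁻¹(0)) ≤ L ‖R m‖`
(`PiecewisePolyhedral.error_bound`): pieces of the graph meeting `{R = 0}` are treated by Hoffman's
bound, proved here by eliminating one direction at a time, and on the remaining pieces `‖R‖` is
bounded away from zero. Inserting the error bound in the descent estimate yields
`(1 + κ) dist_𝒫(m⁺)² ≤ dist_𝒫(m)²`, so `μ̂ = (1 + κ)^(-1/2)`.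

The conjugates enter only through the monotonicity of their subdifferentials, expressed with
`IsProx`. This uses that `p*` and `q*` are proper (an affine minorant exists by Hahn–Banach): for
a conjugate identically `⊤` the predicate `IsProx` would hold of every pair of points.
-/


open scoped RealInnerProductSpace
open Filter Topology

noncomputable section

/-- A polyhedral set: the solution set of finitely many affine inequalities. -/
def IsPolyhedral {E : Type*} [AddCommGroup E] [Module ℝ E] (s : Set E) : Prop :=
  ∃ (k : ℕ) (f : Fin k → E →ₗ[ℝ] ℝ) (c : Fin k → ℝ), s = {x | ∀ i, f i x ≤ c i}

/-- A piecewise polyhedral set: a finite union of polyhedral sets. -/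
def PiecewisePolyhedral {E : Type*} [AddCommGroup E] [Module ℝ E] (s : Set E) : Prop :=
  ∃ (k : ℕ) (P : Fin k → Set E), (∀ i, IsPolyhedral (P i)) ∧ s = ⋃ i, P i

variable {𝒳 𝒴 𝒵 : Type*}
  [NormedAddCommGroup 𝒳] [InnerProductSpace ℝ 𝒳] [FiniteDimensional ℝ 𝒳]
  [NormedAddCommGroup 𝒴] [InnerProductSpace ℝ 𝒴] [FiniteDimensional ℝ 𝒴]
  [NormedAddCommGroup 𝒵] [InnerProductSpace ℝ 𝒵] [FiniteDimensional ℝ 𝒵]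

/-- The KKT mapping `R(u,v,w,x,y) = (u + b − Ax − By, v − Prox_{p*}(v + x),
w − Prox_{q*}(w + y), −A*u − v, −B*u − w)`, where `Pp = Prox_{p*}` and
`Pq = Prox_{q*}`. -/
def kktMap (A : 𝒳 →ₗ[ℝ] 𝒵) (B : 𝒴 →ₗ[ℝ] 𝒵) (b : 𝒵) (Pp : 𝒳 → 𝒳) (Pq : 𝒴 → 𝒴)
    (m : 𝒵 × 𝒳 × 𝒴 × 𝒳 × 𝒴) : 𝒵 × 𝒳 × 𝒴 × 𝒳 × 𝒴 :=
  (m.1 + b - A m.2.2.2.1 - B m.2.2.2.2,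
   m.2.1 - Pp (m.2.1 + m.2.2.2.1),
   m.2.2.1 - Pq (m.2.2.1 + m.2.2.2.2),
   -(LinearMap.adjoint A m.1) - m.2.1,
   -(LinearMap.adjoint B m.1) - m.2.2.1)

/-- The Euclidean norm on `M = 𝒵 × 𝒳 × 𝒴 × 𝒳 × 𝒴`. -/
def euclNorm (m : 𝒵 × 𝒳 × 𝒴 × 𝒳 × 𝒴) : ℝ :=
  Real.sqrt (‖m.1‖ ^ 2 + ‖m.2.1‖ ^ 2 + ‖m.2.2.1‖ ^ 2
    + ‖m.2.2.2.1‖ ^ 2 + ‖m.2.2.2.2‖ ^ 2)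

/-- The norm `‖m‖_𝒫 = √⟨m, 𝒫m⟩` induced by
`𝒫 = Diag(I, σI, (τσ)⁻¹I) + s_τ σ Γ Γ*`, where
`Γ*(u,v,w,x,y) = (−A*u − v, −B*u − w)` and
`s_τ = (5 − τ − 3·min{τ, τ⁻¹})/4`. -/
def pNorm (A : 𝒳 →ₗ[ℝ] 𝒵) (B : 𝒴 →ₗ[ℝ] 𝒵) (σ τ : ℝ)
    (m : 𝒵 × 𝒳 × 𝒴 × 𝒳 × 𝒴) : ℝ :=
  Real.sqrt (‖m.1‖ ^ 2 + σ * (‖m.2.1‖ ^ 2 + ‖m.2.2.1‖ ^ 2)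
    + (τ * σ)⁻¹ * (‖m.2.2.2.1‖ ^ 2 + ‖m.2.2.2.2‖ ^ 2)
    + ((5 - τ - 3 * min τ τ⁻¹) / 4) * σ *
        (‖-(LinearMap.adjoint A m.1) - m.2.1‖ ^ 2
          + ‖-(LinearMap.adjoint B m.1) - m.2.2.1‖ ^ 2))

/-- Euclidean distance from `m` to a set `Ω ⊆ M`. -/
def distEucl (m : 𝒵 × 𝒳 × 𝒴 × 𝒳 × 𝒴) (Ω : Set (𝒵 × 𝒳 × 𝒴 × 𝒳 × 𝒴)) : ℝ :=
  ⨅ ω : Ω, euclNorm (m - (ω : 𝒵 × 𝒳 × 𝒴 × 𝒳 × 𝒴))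

/-- `𝒫`-distance from `m` to a set `Ω ⊆ M`. -/
def distPnorm (A : 𝒳 →ₗ[ℝ] 𝒵) (B : 𝒴 →ₗ[ℝ] 𝒵) (σ τ : ℝ)
    (m : 𝒵 × 𝒳 × 𝒴 × 𝒳 × 𝒴) (Ω : Set (𝒵 × 𝒳 × 𝒴 × 𝒳 × 𝒴)) : ℝ :=
  ⨅ ω : Ω, pNorm A B σ τ (m - (ω : 𝒵 × 𝒳 × 𝒴 × 𝒳 × 𝒴))


set_option linter.unusedSectionVars false

/-! ### Proximal points of a conjugate function -/

section Prox

variable {E : Type*} [NormedAddCommGroup E] [InnerProductSpace ℝ E]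

/-- The bound `f* y ≤ α` says exactly that `f` lies above the affine function `⟪y, ·⟫ - α`. -/
lemma fenchelConj_le_coe_iff {f : E → EReal} {y : E} {α : ℝ} :
    fenchelConj f y ≤ (α : EReal) ↔ ∀ z : E, ∀ t : ℝ, f z ≤ (t : EReal) → ⟪y, z⟫ - t ≤ α := by
  unfold fenchelConj
  rw [iSup_le_iff]
  refine forall_congr' fun z => ?_
  constructor
  · intro h t ht
    have h1 : ((⟪y, z⟫ : ℝ) : EReal) - (t : EReal) ≤ (α : EReal) :=
      (EReal.sub_le_sub le_rfl ht).trans h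
    exact_mod_cast h1
  · intro h
    induction hz : f z with
    | bot =>
      exfalso
      have h1 := h (⟪y, z⟫ - α - 1) (by rw [hz]; exact bot_le)
      linarith
    | coe t =>
      have h1 := h t hz.le
      exact_mod_cast h1
    | top => simp

/-- A proper lower semicontinuous convex function has an affine minorant, so its conjugate is
somewhere finite. -/
lemma ProperConvexLsc.exists_fenchelConj_le [FiniteDimensional ℝ E] {f : E → EReal}
    (hf : ProperConvexLsc f) : ∃ (y : E) (α : ℝ), fenchelConj f y ≤ (α : EReal) := by
  obtain ⟨hbot, ⟨x₀, hx₀⟩, hlsc, hconv⟩ := hf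
  have : CompleteSpace E := FiniteDimensional.complete ℝ E
  obtain ⟨t₀, ht₀⟩ : ∃ t₀ : ℝ, f x₀ = t₀ :=
    ⟨(f x₀).toReal, (EReal.coe_toReal hx₀ (hbot x₀)).symm⟩
  set epi : Set (E × ℝ) := {z | f z.1 ≤ (z.2 : EReal)} with hepi
  have hclosed : IsClosed epi := by
    have h1 := hlsc.isClosed_epigraph
    have h2 : Continuous fun z : E × ℝ => (z.1, (z.2 : EReal)) := by
      have := continuous_coe_real_ereal
      fun_prop
    exact h1.preimage h2
  have hconvex : Convex ℝ epi := by
    rintro ⟨x, s⟩ hs ⟨y, t⟩ ht a c ha hc hac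
    simp only [hepi, Set.mem_ofPred_eq] at hs ht ⊢
    have ha' : (0 : EReal) ≤ (a : EReal) := by exact_mod_cast ha
    have hc' : (0 : EReal) ≤ (c : EReal) := by exact_mod_cast hc
    calc f (a • x + c • y) ≤ (a : EReal) * f x + (c : EReal) * f y := hconv x y a c ha hc hac
      _ ≤ (a : EReal) * (s : EReal) + (c : EReal) * (t : EReal) :=
          add_le_add (mul_le_mul_of_nonneg_left hs ha') (mul_le_mul_of_nonneg_left ht hc')
      _ = ((a • s + c • t : ℝ) : EReal) := by push_cast [smul_eq_mul]; rfl
  have hnot : (x₀, t₀ - 1) ∉ epi := by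
    simp only [hepi, Set.mem_ofPred_eq, ht₀, EReal.coe_le_coe_iff]
    linarith
  obtain ⟨g, γ, hg1, hg2⟩ := geometric_hahn_banach_point_closed hconvex hclosed hnot
  have hsplit : ∀ (z : E) (t : ℝ), g (z, t) = g (z, 0) + t * g (0, 1) := by
    intro z t
    have : ((z, t) : E × ℝ) = (z, 0) + t • ((0, 1) : E × ℝ) := by simp
    rw [this, map_add, map_smul, smul_eq_mul]
  -- the separating hyperplane is not vertical: it separates two points over `x₀`
  have hβ : 0 < g (0, 1) := by
    have h1 := hg2 (x₀, t₀) (by simp [hepi, ht₀])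
    rw [hsplit] at h1 hg1
    linarith
  set β := g (0, 1)
  set a : E := (InnerProductSpace.toDual ℝ E).symm (g.comp (ContinuousLinearMap.inl ℝ E ℝ))
  have ha : ∀ z, ⟪a, z⟫ = g (z, 0) := by
    intro z
    simp [a]
  refine ⟨-(β⁻¹ • a), -(γ / β), fenchelConj_le_coe_iff.2 fun z t hzt => ?_⟩
  have h1 := hg2 (z, t) hzt
  rw [hsplit] at h1
  rw [inner_neg_left, real_inner_smul_left, ha]
  have h2 : -(β⁻¹ * g (z, 0)) - t - -(γ / β) = (γ - (g (z, 0) + t * β)) / β := by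
    field_simp
    ring
  have h3 : (γ - (g (z, 0) + t * β)) / β ≤ 0 :=
    div_nonpos_of_nonpos_of_nonneg (by linarith) hβ.le
  linarith

/-- At a proximal point of `f*` the conjugate takes a finite value. -/
lemma IsProx.exists_eq_coe [FiniteDimensional ℝ E] {f : E → EReal} (hf : ProperConvexLsc f)
    {l : ℝ} {z q : E} (h : IsProx (fenchelConj f) l z q) : ∃ F : ℝ, fenchelConj f q = F := by
  obtain ⟨y, α, hy⟩ := hf.exists_fenchelConj_le
  have hbot : fenchelConj f q ≠ ⊥ := by
    obtain ⟨hb, ⟨x₀, hx₀⟩, -, -⟩ := hf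
    intro hq
    have h1 := le_iSup (fun x : E => ((⟪q, x⟫ : ℝ) : EReal) - f x) x₀
    change _ ≤ fenchelConj f q at h1
    rw [hq, ← EReal.coe_toReal hx₀ (hb x₀), ← EReal.coe_sub, le_bot_iff] at h1
    exact EReal.coe_ne_bot _ h1
  have htop : fenchelConj f q ≠ ⊤ := by
    intro hq
    have h1 := (h y).trans (add_le_add_left hy _)
    rw [hq, EReal.top_add_coe, ← EReal.coe_add, top_le_iff] at h1
    exact EReal.coe_ne_top _ h1
  exact ⟨_, (EReal.coe_toReal htop hbot).symm⟩

/-- Optimality of a proximal point: `l⁻¹ (z - q)` is a subgradient of `f*` at `q`. -/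
lemma IsProx.subgradient [FiniteDimensional ℝ E] {f : E → EReal} {l : ℝ} (hl : 0 < l) {z q : E}
    (h : IsProx (fenchelConj f) l z q) {F : ℝ} (hF : fenchelConj f q = F) {y : E} {α : ℝ}
    (hy : fenchelConj f y ≤ (α : EReal)) : F + l⁻¹ * ⟪z - q, y - q⟫ ≤ α := by
  have key : ∀ t : ℝ, 0 < t → t ≤ 1 →
      F + l⁻¹ * ⟪z - q, y - q⟫ ≤ α + t * (1 / (2 * l) * ‖y - q‖ ^ 2) := by
    intro t ht ht1
    have hc : fenchelConj f (q + t • (y - q)) ≤ (((1 - t) * F + t * α : ℝ) : EReal) := by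
      rw [fenchelConj_le_coe_iff]
      intro x s hs
      have h1 := fenchelConj_le_coe_iff.1 hF.le x s hs
      have h2 := fenchelConj_le_coe_iff.1 hy x s hs
      rw [inner_add_left, real_inner_smul_left, inner_sub_left]
      nlinarith
    have h1 := (h (q + t • (y - q))).trans (add_le_add_left hc _)
    rw [hF, ← EReal.coe_add, ← EReal.coe_add, EReal.coe_le_coe_iff] at h1
    have h2 : ‖q + t • (y - q) - z‖ ^ 2
        = ‖q - z‖ ^ 2 - 2 * t * ⟪z - q, y - q⟫ + t ^ 2 * ‖y - q‖ ^ 2 := by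
      have : q + t • (y - q) - z = t • (y - q) - (z - q) := by abel
      rw [this, norm_sub_sq_real, norm_smul, real_inner_smul_left, real_inner_comm, mul_pow,
        Real.norm_eq_abs, sq_abs, norm_sub_rev q z]
      ring
    rw [h2] at h1
    have h3 : 1 / (2 * l) * (2 * t * ⟪z - q, y - q⟫) = t * (l⁻¹ * ⟪z - q, y - q⟫) := by
      field_simp
    have h4 : t * (F + l⁻¹ * ⟪z - q, y - q⟫) ≤ t * (α + t * (1 / (2 * l) * ‖y - q‖ ^ 2)) := by
      linarith
    exact le_of_mul_le_mul_left h4 ht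
  refine le_of_forall_pos_le_add fun ε hε => ?_
  set K := 1 / (2 * l) * ‖y - q‖ ^ 2
  have hK : 0 ≤ K := by positivity
  have h1 := key (min 1 (ε / (K + 1))) (by positivity) (min_le_left _ _)
  have h2 : min 1 (ε / (K + 1)) * K ≤ ε / (K + 1) * K :=
    mul_le_mul_of_nonneg_right (min_le_right _ _) hK
  have h3 : ε / (K + 1) * K ≤ ε := by
    rw [div_mul_eq_mul_div, div_le_iff₀ (by positivity)]
    nlinarith
  linarith

/-- Monotonicity of `∂f*`, phrased for proximal points with possibly different parameters. -/
lemma IsProx.monotone [FiniteDimensional ℝ E] {f : E → EReal} (hf : ProperConvexLsc f)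
    {l₁ l₂ : ℝ} (hl₁ : 0 < l₁) (hl₂ : 0 < l₂) {z₁ z₂ q₁ q₂ : E}
    (h₁ : IsProx (fenchelConj f) l₁ z₁ q₁) (h₂ : IsProx (fenchelConj f) l₂ z₂ q₂) :
    0 ≤ ⟪l₁⁻¹ • (z₁ - q₁) - l₂⁻¹ • (z₂ - q₂), q₁ - q₂⟫ := by
  obtain ⟨F₁, hF₁⟩ := h₁.exists_eq_coe hf
  obtain ⟨F₂, hF₂⟩ := h₂.exists_eq_coe hf
  have e₁ := h₁.subgradient hl₁ hF₁ hF₂.le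
  have e₂ := h₂.subgradient hl₂ hF₂ hF₁.le
  rw [inner_sub_left, real_inner_smul_left, real_inner_smul_left]
  rw [← neg_sub q₁ q₂, inner_neg_right] at e₁
  linarith

/-- If `g ∈ ∂f*(v)` then the fixed-point residual `v - Prox_{f*}(v + x)` is at most `‖x - g‖`,
because `v = Prox_{f*}(v + g)` and proximal maps are nonexpansive. The membership is given
through `v` being a proximal point. -/
lemma IsProx.norm_residual_le [FiniteDimensional ℝ E] {f : E → EReal} (hf : ProperConvexLsc f)
    {l : ℝ} (hl : 0 < l) {z v x g q : E} (h : IsProx (fenchelConj f) l z v)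
    (hg : l⁻¹ • (z - v) = g) (hq : IsProx (fenchelConj f) 1 (v + x) q) :
    ‖v - q‖ ≤ ‖x - g‖ := by
  have h1 := IsProx.monotone hf hl one_pos h hq
  rw [hg, inv_one, one_smul] at h1
  have h2 : g - (v + x - q) = -(v - q) - (x - g) := by abel
  rw [h2, inner_sub_left, inner_neg_left, real_inner_self_eq_norm_sq] at h1
  have h3 := real_inner_le_norm (-(x - g)) (v - q)
  rw [inner_neg_left, norm_neg] at h3
  by_contra! hcon
  have h4 : 0 ≤ ‖x - g‖ := norm_nonneg _
  nlinarith

end Prox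

/-! ### Error bounds for polyhedral and piecewise polyhedral sets -/

section Hoffman

/-- A finite system of inequalities `a i * s ≤ b i` in one real unknown is solvable as soon as
every pair of a lower and an upper bound is compatible (the one-variable elimination step of
Fourier and Motzkin). -/
lemma exists_solution_of_pairwise {ι : Type} [Fintype ι] (a b : ι → ℝ)
    (h0 : ∀ i, a i = 0 → 0 ≤ b i)
    (h1 : ∀ i j, 0 < a i → a j < 0 → a j * b i ≤ a i * b j) :
    ∃ s : ℝ, ∀ i, a i * s ≤ b i := by
  set lo : Set ℝ := (fun i => b i / a i) '' {i | a i < 0}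
  set hi : Set ℝ := (fun i => b i / a i) '' {i | 0 < a i}
  have hlo : lo.Finite := (Set.toFinite _).image _
  have hhi : hi.Finite := (Set.toFinite _).image _
  have key : ∃ s, s ∈ upperBounds lo ∩ lowerBounds hi := by
    rcases lo.eq_empty_or_nonempty with hl | hl
    · obtain ⟨s, hs⟩ := hhi.bddBelow
      exact ⟨s, by simp [hl], hs⟩
    rcases hi.eq_empty_or_nonempty with hh | hh
    · obtain ⟨s, hs⟩ := hlo.bddAbove
      exact ⟨s, hs, by simp [hh]⟩
    refine exists_between_of_forall_le hl hh ?_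
    rintro _ ⟨j, hj, rfl⟩ _ ⟨i, hi, rfl⟩
    simp only [Set.mem_ofPred_eq] at hi hj
    have := h1 i j hi hj
    rw [div_le_iff_of_neg hj, div_mul_eq_mul_div, div_le_iff₀ hi]
    linarith
  obtain ⟨s, hs1, hs2⟩ := key
  refine ⟨s, fun i => ?_⟩
  rcases lt_trichotomy (a i) 0 with h | h | h
  · have := hs1 ⟨i, h, rfl⟩
    rw [div_le_iff_of_neg h] at this
    linarith
  · rw [h, zero_mul]
    exact h0 i h
  · have := hs2 ⟨i, h, rfl⟩
    rw [le_div_iff₀ h] at this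
    linarith

variable {G : Type*} [NormedAddCommGroup G] [NormedSpace ℝ G]

/-- If `z` lies in a polyhedron and the line `y + ℝ d` meets it, then it does so at a point
`y + s • d` with `|s|` controlled by `‖y - z‖`: clamping a feasible parameter to `[-ρ, ρ]`,
where `ρ = κ ‖y - z‖`, keeps it feasible. -/
lemma exists_line_point [FiniteDimensional ℝ G] {ι : Type} [Fintype ι] (f : ι → G →ₗ[ℝ] ℝ) (c : ι → ℝ) (d : G) :
    ∃ κ : ℝ, 0 ≤ κ ∧ ∀ z y : G, ∀ s : ℝ, (∀ i, f i z ≤ c i) → (∀ i, f i (y + s • d) ≤ c i) →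
      ∃ s' : ℝ, (∀ i, f i (y + s' • d) ≤ c i) ∧ |s'| ≤ κ * ‖y - z‖ := by
  have hC : ∀ i, ∃ C : ℝ, 0 ≤ C ∧ ∀ z, |f i z| ≤ C * ‖z‖ := fun i =>
    ⟨‖(f i).toContinuousLinearMap‖, norm_nonneg _,
      fun z => (f i).toContinuousLinearMap.le_opNorm z⟩
  choose C hC0 hC using hC
  refine ⟨∑ i, C i / |f i d|, Finset.sum_nonneg fun i _ => div_nonneg (hC0 i) (abs_nonneg _), ?_⟩
  set κ := ∑ i, C i / |f i d|
  intro z y s hz hs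
  have hκ : ∀ i, f i d ≠ 0 → C i ≤ κ * |f i d| := by
    intro i hi
    rw [← div_le_iff₀ (abs_pos.2 hi)]
    exact Finset.single_le_sum (f := fun i => C i / |f i d|)
      (fun i _ => div_nonneg (hC0 i) (abs_nonneg _)) (Finset.mem_univ i)
  -- the violation of each constraint at `y` is compensated by a step of length `ρ` along `d`
  have hviol : ∀ i, f i d ≠ 0 → f i y - |f i d| * (κ * ‖y - z‖) ≤ c i := by
    intro i hi
    have h1 := (le_abs_self _).trans (hC i (y - z))
    rw [map_sub] at h1
    have h2 := mul_le_mul_of_nonneg_right (hκ i hi) (norm_nonneg (y - z))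
    have h3 := hz i
    linarith
  set ρ := κ * ‖y - z‖
  have hρ : 0 ≤ ρ := mul_nonneg
    (Finset.sum_nonneg fun i _ => div_nonneg (hC0 i) (abs_nonneg _)) (norm_nonneg _)
  simp only [map_add, map_smul, smul_eq_mul] at hs ⊢
  rcases le_or_gt |s| ρ with h | h
  · exact ⟨s, hs, h⟩
  rcases lt_abs.1 h with h | h
  · refine ⟨ρ, fun i => ?_, (abs_of_nonneg hρ).le⟩
    rcases le_or_gt 0 (f i d) with hd | hd
    · nlinarith [hs i]
    · have := hviol i hd.ne
      rw [abs_of_neg hd] at this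
      linarith
  · refine ⟨-ρ, fun i => ?_, by rw [abs_neg, abs_of_nonneg hρ]⟩
    rcases le_or_gt (f i d) 0 with hd | hd
    · nlinarith [hs i]
    · have := hviol i hd.ne'
      rw [abs_of_pos hd] at this
      linarith

/-- Fourier–Motzkin elimination: the sum of a polyhedron and a line is a polyhedron. -/
lemma exists_polyhedral_add_line {ι : Type} [Fintype ι] (f : ι → G →ₗ[ℝ] ℝ) (c : ι → ℝ)
    (d : G) : ∃ (g : ι ⊕ ι × ι → G →ₗ[ℝ] ℝ) (e : ι ⊕ ι × ι → ℝ),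
      ∀ z : G, (∀ k, g k z ≤ e k) ↔ ∃ s : ℝ, ∀ i, f i (z + s • d) ≤ c i := by
  classical
  refine ⟨Sum.elim (fun i => if f i d = 0 then f i else 0)
      (fun ij => if 0 < f ij.1 d ∧ f ij.2 d < 0
        then f ij.1 d • f ij.2 - f ij.2 d • f ij.1 else 0),
    Sum.elim (fun i => if f i d = 0 then c i else 0)
      (fun ij => if 0 < f ij.1 d ∧ f ij.2 d < 0
        then f ij.1 d * c ij.2 - f ij.2 d * c ij.1 else 0), fun z => ?_⟩
  constructor
  · intro h
    obtain ⟨s, hs⟩ := exists_solution_of_pairwise (fun i => f i d) (fun i => c i - f i z)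
      (by
        intro i hi
        have := h (Sum.inl i)
        simp only [Sum.elim_inl, if_pos hi] at this
        linarith)
      (by
        intro i j hi hj
        have := h (Sum.inr (i, j))
        simp only [Sum.elim_inr, if_pos (And.intro hi hj), LinearMap.sub_apply,
          LinearMap.smul_apply, smul_eq_mul] at this
        linarith)
    refine ⟨s, fun i => ?_⟩
    have := hs i
    simp only [map_add, map_smul, smul_eq_mul]
    linarith
  · rintro ⟨s, hs⟩ k
    simp only [map_add, map_smul, smul_eq_mul] at hs
    rcases k with i | ⟨i, j⟩
    · simp only [Sum.elim_inl]
      split_ifs with hi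
      · simpa [hi] using hs i
      · simp
    · simp only [Sum.elim_inr]
      split_ifs with hij
      · have h1 := mul_le_mul_of_nonneg_left (hs j) hij.1.le
        have h2 := mul_le_mul_of_nonpos_left (hs i) hij.2.le
        simp only [LinearMap.sub_apply, LinearMap.smul_apply, smul_eq_mul]
        linarith
      · simp

/-- Hoffman's bound in relative form. If `z` and `y` lie in a polyhedron and `y` agrees with
`z + δ` modulo the subspace `W`, then some point of the polyhedron agrees with `y` modulo `W`
and is within `L * ‖δ‖` of `z`. The directions spanning `W` are eliminated one at a time. -/
lemma hoffman_bound [FiniteDimensional ℝ G] (W : Submodule ℝ G) {ι : Type} [Fintype ι] (f : ι → G →ₗ[ℝ] ℝ)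
    (c : ι → ℝ) :
    ∃ L : ℝ, 0 ≤ L ∧ ∀ z y δ : G, (∀ i, f i z ≤ c i) → (∀ i, f i y ≤ c i) → y - z - δ ∈ W →
      ∃ z' : G, (∀ i, f i z' ≤ c i) ∧ z' - y ∈ W ∧ ‖z' - z‖ ≤ L * ‖δ‖ := by
  classical
  obtain ⟨S, rfl⟩ : W.FG := IsNoetherian.noetherian W
  induction S using Finset.induction_on generalizing ι with
  | empty =>
    refine ⟨1, zero_le_one, fun z y δ _ hy h => ⟨y, hy, by simp, ?_⟩⟩
    simp only [Finset.coe_empty, Submodule.span_empty, Submodule.mem_bot] at h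
    rw [sub_eq_zero.1 h, one_mul]
  | insert d S _ ih =>
    obtain ⟨g, e, hge⟩ := exists_polyhedral_add_line f c d
    obtain ⟨L, hL, hLip⟩ := ih g e
    obtain ⟨κ, hκ, hline⟩ := exists_line_point f c d
    refine ⟨(1 + κ * ‖d‖) * L, by positivity, fun z y δ hz hy h => ?_⟩
    rw [Finset.coe_insert, Submodule.mem_span_insert] at h
    obtain ⟨t, w, hw, htw⟩ := h
    have hz' : ∀ k, g k z ≤ e k := (hge z).2 ⟨0, by simpa using hz⟩
    have hy' : ∀ k, g k (y - t • d) ≤ e k := (hge _).2 ⟨t, by simpa using hy⟩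
    obtain ⟨z₁, hz₁, hz₁W, hz₁n⟩ := hLip z (y - t • d) δ hz' hy' (by
      have : y - t • d - z - δ = w := by
        have : y - t • d - z - δ = y - z - δ - t • d := by abel
        rw [this, htw, add_sub_cancel_left]
      rwa [this])
    obtain ⟨s, hs⟩ := (hge z₁).1 hz₁
    obtain ⟨s', hs', hs'n⟩ := hline z z₁ s hz hs
    refine ⟨z₁ + s' • d, hs', ?_, ?_⟩
    · rw [Finset.coe_insert, Submodule.mem_span_insert]
      exact ⟨s' - t, _, hz₁W, by rw [sub_smul]; abel⟩
    · have h1 : ‖z₁ + s' • d - z‖ ≤ ‖z₁ - z‖ + |s'| * ‖d‖ := by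
        have : z₁ + s' • d - z = (z₁ - z) + s' • d := by abel
        rw [this]
        refine (norm_add_le _ _).trans ?_
        rw [norm_smul, Real.norm_eq_abs]
      calc ‖z₁ + s' • d - z‖ ≤ ‖z₁ - z‖ + (κ * ‖z₁ - z‖) * ‖d‖ :=
            h1.trans (by gcongr)
        _ = (1 + κ * ‖d‖) * ‖z₁ - z‖ := by ring
        _ ≤ (1 + κ * ‖d‖) * (L * ‖δ‖) := by gcongr
        _ = _ := by ring

lemma IsPolyhedral.isClosed [FiniteDimensional ℝ G] {s : Set G} (hs : IsPolyhedral s) :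
    IsClosed s := by
  obtain ⟨k, f, c, rfl⟩ := hs
  simp only [Set.ofPred_forall]
  exact isClosed_iInter fun i =>
    isClosed_le (f i).continuous_of_finiteDimensional continuous_const

/-- Error bound for a map whose graph is piecewise polyhedral, uniform on bounded sets. On a
piece of the graph reaching the value `0` this is Hoffman's bound; on any other piece the
residual is bounded away from `0` by compactness. -/
lemma PiecewisePolyhedral.error_bound [FiniteDimensional ℝ G] {R : G → G}
    (hR : PiecewisePolyhedral {mm : G × G | mm.2 = R mm.1}) {m₀ : G} (hm₀ : R m₀ = 0)
    {K : Set G} (hK : Bornology.IsBounded K) :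
    ∃ L : ℝ, 0 < L ∧ ∀ m ∈ K, ∃ m', R m' = 0 ∧ ‖m - m'‖ ≤ L * ‖R m‖ := by
  have : ProperSpace G := FiniteDimensional.proper ℝ G
  obtain ⟨n, P, hP, hgraph⟩ := hR
  have hmem : ∀ i z, z ∈ P i → z.2 = R z.1 := fun i z hz => by
    have : z ∈ {mm : G × G | mm.2 = R mm.1} := hgraph ▸ Set.mem_iUnion.2 ⟨i, hz⟩
    exact this
  have piece : ∀ i, ∃ L : ℝ, 0 ≤ L ∧ ∀ m ∈ K, (m, R m) ∈ P i →
      ∃ m', R m' = 0 ∧ ‖m - m'‖ ≤ L * ‖R m‖ := by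
    intro i
    by_cases h0 : ∃ m₁, (m₁, (0 : G)) ∈ P i
    · obtain ⟨m₁, hm₁⟩ := h0
      obtain ⟨k, f, c, hPi⟩ := hP i
      obtain ⟨L, hL, hLip⟩ := hoffman_bound (Submodule.prod (⊤ : Submodule ℝ G) ⊥) f c
      refine ⟨L, hL, fun m _ hm => ?_⟩
      obtain ⟨z', hz', hz'W, hz'n⟩ := hLip (m, R m) (m₁, 0) (0, -R m)
        (by rw [hPi] at hm; exact hm) (by rw [hPi] at hm₁; exact hm₁)
        (by simp [Submodule.mem_prod])
      have hz'0 : z'.2 = 0 := by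
        simpa [Submodule.mem_prod] using hz'W
      refine ⟨z'.1, ?_, ?_⟩
      · rw [← hmem i z' (by rw [hPi]; exact hz'), hz'0]
      · have h1 : ‖m - z'.1‖ ≤ ‖z' - (m, R m)‖ := by
          rw [norm_sub_rev]
          exact norm_fst_le (z' - (m, R m))
        have h2 : ‖((0 : G), -R m)‖ = ‖R m‖ := by simp [Prod.norm_def]
        rw [h2] at hz'n
        exact h1.trans hz'n
    · push Not at h0
      have hcomp : IsCompact (closure K ×ˢ ({0} : Set G)) :=
        hK.isCompact_closure.prod isCompact_singleton
      have hdisj : Disjoint (closure K ×ˢ ({0} : Set G)) (P i) := by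
        rw [Set.disjoint_left]
        rintro ⟨a, b⟩ ⟨-, hb⟩ hab
        simp only [Set.mem_singleton_iff] at hb
        exact h0 a (hb ▸ hab)
      obtain ⟨r, hr, hsep⟩ := Metric.exists_pos_forall_lt_edist hcomp (hP i).isClosed hdisj
      obtain ⟨D, hD⟩ := hK.subset_closedBall m₀
      refine ⟨max D 0 / r, by positivity, fun m hm hmP => ⟨m₀, hm₀, ?_⟩⟩
      have h1 := hsep (m, 0) ⟨subset_closure hm, rfl⟩ _ hmP
      rw [Prod.edist_eq] at h1
      have h2 : (r : ℝ) < ‖R m‖ := by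
        rw [edist_self, max_eq_right zero_le, edist_nndist, ENNReal.coe_lt_coe] at h1
        have h3 : (r : ℝ) < nndist 0 (R m) := by exact_mod_cast h1
        simpa using h3
      have h3 : ‖m - m₀‖ ≤ max D 0 := by
        have := hD hm
        rw [Metric.mem_closedBall, dist_eq_norm] at this
        exact this.trans (le_max_left _ _)
      have hr' : (0 : ℝ) < r := by exact_mod_cast hr
      calc ‖m - m₀‖ ≤ max D 0 := h3
        _ = max D 0 / r * r := by field_simp
        _ ≤ max D 0 / r * ‖R m‖ := by gcongr
  choose L hL hbd using piece
  refine ⟨1 + ∑ i, L i, by have := Finset.sum_nonneg fun i (_ : i ∈ Finset.univ) => hL i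
                           linarith, fun m hm => ?_⟩
  have hmg : (m, R m) ∈ ⋃ i, P i := hgraph ▸ rfl
  obtain ⟨i, hi⟩ := Set.mem_iUnion.1 hmg
  obtain ⟨m', hm', hle⟩ := hbd i m hm hi
  refine ⟨m', hm', hle.trans ?_⟩
  have := Finset.single_le_sum (f := L) (fun i _ => hL i) (Finset.mem_univ i)
  gcongr
  linarith

end Hoffman

/-! ### Norms on the product space -/

section Norms

/-- The coefficient `s_τ` is positive for `τ` below the golden ratio. -/
lemma sCoeff_pos {τ : ℝ} (hτ0 : 0 < τ) (hτ : τ ^ 2 < 1 + τ) :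
    0 < (5 - τ - 3 * min τ τ⁻¹) / 4 := by
  rcases le_total τ τ⁻¹ with h | h
  · rw [min_eq_left h]
    have : τ * τ ≤ 1 := by
      have := mul_le_mul_of_nonneg_left h hτ0.le
      rwa [mul_inv_cancel₀ hτ0.ne'] at this
    nlinarith
  · rw [min_eq_right h]
    have h1 : 1 ≤ τ * τ := by
      have := mul_le_mul_of_nonneg_left h hτ0.le
      rwa [mul_inv_cancel₀ hτ0.ne'] at this
    have h2 : τ * τ⁻¹ = 1 := mul_inv_cancel₀ hτ0.ne'
    have h3 : τ < 2 := by nlinarith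
    have h4 : 1 ≤ τ := by nlinarith
    have h5 : τ⁻¹ ≤ 1 := inv_le_one_of_one_le₀ h4
    have h6 : 0 < τ * (5 - τ - 3 * τ⁻¹) := by nlinarith
    have := pos_of_mul_pos_right h6 hτ0.le
    linarith

lemma norm_le_euclNorm (m : 𝒵 × 𝒳 × 𝒴 × 𝒳 × 𝒴) : ‖m‖ ≤ euclNorm m := by
  obtain ⟨m1, m2, m3, m4, m5⟩ := m
  simp only [Prod.norm_mk, max_le_iff, euclNorm]
  refine ⟨?_, ?_, ?_, ?_, ?_⟩ <;> refine Real.le_sqrt_of_sq_le ?_ <;> nlinarith [sq_nonneg ‖m1‖,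
    sq_nonneg ‖m2‖, sq_nonneg ‖m3‖, sq_nonneg ‖m4‖, sq_nonneg ‖m5‖]

lemma sq_component_le (m : 𝒵 × 𝒳 × 𝒴 × 𝒳 × 𝒴) :
    ‖m.1‖ ^ 2 ≤ ‖m‖ ^ 2 ∧ ‖m.2.1‖ ^ 2 ≤ ‖m‖ ^ 2 ∧ ‖m.2.2.1‖ ^ 2 ≤ ‖m‖ ^ 2 ∧
      ‖m.2.2.2.1‖ ^ 2 ≤ ‖m‖ ^ 2 ∧ ‖m.2.2.2.2‖ ^ 2 ≤ ‖m‖ ^ 2 := by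
  have h1 := norm_snd_le m
  have h2 := (norm_snd_le m.2).trans h1
  have h3 := (norm_snd_le m.2.2).trans h2
  have h4 := (norm_snd_le m.2.2.2).trans h3
  refine ⟨?_, ?_, ?_, ?_, ?_⟩ <;> refine pow_le_pow_left₀ (norm_nonneg _) ?_ 2
  · exact norm_fst_le m
  · exact (norm_fst_le m.2).trans h1
  · exact (norm_fst_le m.2.2).trans h2
  · exact (norm_fst_le m.2.2.2).trans h3
  · exact h4

lemma euclNorm_le_norm (m : 𝒵 × 𝒳 × 𝒴 × 𝒳 × 𝒴) : euclNorm m ≤ 3 * ‖m‖ := by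
  obtain ⟨h1, h2, h3, h4, h5⟩ := sq_component_le m
  refine Real.sqrt_le_iff.2 ⟨by positivity, ?_⟩
  nlinarith [sq_nonneg ‖m‖]

lemma euclNorm_nonneg (m : 𝒵 × 𝒳 × 𝒴 × 𝒳 × 𝒴) : 0 ≤ euclNorm m := Real.sqrt_nonneg _

lemma exists_norm_le {E F : Type*} [NormedAddCommGroup E] [NormedSpace ℝ E]
    [FiniteDimensional ℝ E] [NormedAddCommGroup F] [NormedSpace ℝ F] (T : E →ₗ[ℝ] F) :
    ∃ C : ℝ, 0 ≤ C ∧ ∀ z, ‖T z‖ ≤ C * ‖z‖ :=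
  ⟨‖T.toContinuousLinearMap‖, norm_nonneg _, fun z => T.toContinuousLinearMap.le_opNorm z⟩

variable (A : 𝒳 →ₗ[ℝ] 𝒵) (B : 𝒴 →ₗ[ℝ] 𝒵) {σ τ : ℝ}

lemma pNorm_nonneg (m : 𝒵 × 𝒳 × 𝒴 × 𝒳 × 𝒴) : 0 ≤ pNorm A B σ τ m := Real.sqrt_nonneg _

lemma pNorm_sq (hσ : 0 < σ) (hτ0 : 0 < τ) (hτ : τ ^ 2 < 1 + τ)
    (m : 𝒵 × 𝒳 × 𝒴 × 𝒳 × 𝒴) :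
    pNorm A B σ τ m ^ 2 = ‖m.1‖ ^ 2 + σ * (‖m.2.1‖ ^ 2 + ‖m.2.2.1‖ ^ 2)
      + (τ * σ)⁻¹ * (‖m.2.2.2.1‖ ^ 2 + ‖m.2.2.2.2‖ ^ 2)
      + ((5 - τ - 3 * min τ τ⁻¹) / 4) * σ *
        (‖-(LinearMap.adjoint A m.1) - m.2.1‖ ^ 2
          + ‖-(LinearMap.adjoint B m.1) - m.2.2.1‖ ^ 2) := by
  have := sCoeff_pos hτ0 hτ
  exact Real.sq_sqrt (by positivity)

lemma exists_pNorm_le (hσ : 0 < σ) (hτ0 : 0 < τ) (hτ : τ ^ 2 < 1 + τ) :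
    ∃ C : ℝ, 0 < C ∧ ∀ m : 𝒵 × 𝒳 × 𝒴 × 𝒳 × 𝒴, pNorm A B σ τ m ≤ C * ‖m‖ := by
  have hs := sCoeff_pos hτ0 hτ
  obtain ⟨α, hα0, hα⟩ := exists_norm_le (LinearMap.adjoint A)
  obtain ⟨β, hβ0, hβ⟩ := exists_norm_le (LinearMap.adjoint B)
  set s := (5 - τ - 3 * min τ τ⁻¹) / 4 with hs_def
  set K := 1 + 2 * σ + 2 * (τ * σ)⁻¹ + s * σ * ((α + 1) ^ 2 + (β + 1) ^ 2) with hK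
  have hK0 : 0 < K := by positivity
  refine ⟨√K, Real.sqrt_pos.2 hK0, fun m => ?_⟩
  refine le_of_sq_le_sq ?_ (by positivity)
  rw [pNorm_sq A B hσ hτ0 hτ, mul_pow, Real.sq_sqrt hK0.le, ← hs_def]
  obtain ⟨h1, h2, h3, h4, h5⟩ := sq_component_le m
  have hres : ∀ ρ γ d : ℝ, 0 ≤ ρ → 0 ≤ γ → ρ ≤ γ * ‖m.1‖ + d → d ≤ ‖m‖ →
      ρ ^ 2 ≤ (γ + 1) ^ 2 * ‖m‖ ^ 2 := by
    intro ρ γ d hρ hγ h hd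
    rw [← mul_pow]
    refine pow_le_pow_left₀ hρ ?_ 2
    have := mul_le_mul_of_nonneg_left (norm_fst_le m) hγ
    linarith
  have h6 : ‖-(LinearMap.adjoint A m.1) - m.2.1‖ ^ 2 ≤ (α + 1) ^ 2 * ‖m‖ ^ 2 := by
    refine hres _ _ _ (norm_nonneg _) hα0 ?_ (le_of_sq_le_sq h2 (norm_nonneg _))
    refine (norm_sub_le _ _).trans ?_
    rw [norm_neg]
    gcongr
    exact hα m.1
  have h7 : ‖-(LinearMap.adjoint B m.1) - m.2.2.1‖ ^ 2 ≤ (β + 1) ^ 2 * ‖m‖ ^ 2 := by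
    refine hres _ _ _ (norm_nonneg _) hβ0 ?_ (le_of_sq_le_sq h3 (norm_nonneg _))
    refine (norm_sub_le _ _).trans ?_
    rw [norm_neg]
    gcongr
    exact hβ m.1
  have h8 : σ * (‖m.2.1‖ ^ 2 + ‖m.2.2.1‖ ^ 2) ≤ σ * (‖m‖ ^ 2 + ‖m‖ ^ 2) := by gcongr
  have h9 : (τ * σ)⁻¹ * (‖m.2.2.2.1‖ ^ 2 + ‖m.2.2.2.2‖ ^ 2)
      ≤ (τ * σ)⁻¹ * (‖m‖ ^ 2 + ‖m‖ ^ 2) := by gcongr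
  have h10 := mul_le_mul_of_nonneg_left (add_le_add h6 h7) (mul_pos hs hσ).le
  rw [hK]
  linarith

lemma exists_norm_le_pNorm (hσ : 0 < σ) (hτ0 : 0 < τ) (hτ : τ ^ 2 < 1 + τ) :
    ∃ C : ℝ, 0 ≤ C ∧ ∀ m : 𝒵 × 𝒳 × 𝒴 × 𝒳 × 𝒴, ‖m‖ ≤ C * pNorm A B σ τ m := by
  have hs := sCoeff_pos hτ0 hτ
  set s := (5 - τ - 3 * min τ τ⁻¹) / 4 with hs_def
  set K := 1 + σ⁻¹ + τ * σ with hK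
  have hK0 : 0 < K := by positivity
  refine ⟨√K, Real.sqrt_nonneg _, fun m => ?_⟩
  have hsq := pNorm_sq A B hσ hτ0 hτ m
  rw [← hs_def] at hsq
  have e1 : 0 ≤ s * σ * (‖-(LinearMap.adjoint A m.1) - m.2.1‖ ^ 2
          + ‖-(LinearMap.adjoint B m.1) - m.2.2.1‖ ^ 2) := by positivity
  have e2 : 0 ≤ ‖m.1‖ ^ 2 := by positivity
  have e3 : 0 ≤ σ * ‖m.2.1‖ ^ 2 := by positivity
  have e4 : 0 ≤ σ * ‖m.2.2.1‖ ^ 2 := by positivity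
  have e5 : 0 ≤ (τ * σ)⁻¹ * ‖m.2.2.2.1‖ ^ 2 := by positivity
  have e6 : 0 ≤ (τ * σ)⁻¹ * ‖m.2.2.2.2‖ ^ 2 := by positivity
  -- each weight `w` of the quadratic form satisfies `1 ≤ K * w`
  have main : ∀ a w : ℝ, 0 ≤ a → w * a ^ 2 ≤ pNorm A B σ τ m ^ 2 → 0 < w → w⁻¹ ≤ K →
      a ≤ √K * pNorm A B σ τ m := by
    intro a w ha h hw hwK
    refine le_of_sq_le_sq ?_ (mul_nonneg (Real.sqrt_nonneg _) (pNorm_nonneg A B m))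
    rw [mul_pow, Real.sq_sqrt hK0.le]
    calc a ^ 2 = w⁻¹ * (w * a ^ 2) := by field_simp
      _ ≤ K * pNorm A B σ τ m ^ 2 := by gcongr
  have hσi : 0 < σ⁻¹ := by positivity
  have hτσ : 0 < τ * σ := by positivity
  have k1 := main ‖m.1‖ 1 (norm_nonneg _) (by linarith) one_pos (by rw [inv_one, hK]; linarith)
  have k2 := main ‖m.2.1‖ σ (norm_nonneg _) (by linarith) hσ (by rw [hK]; linarith)
  have k3 := main ‖m.2.2.1‖ σ (norm_nonneg _) (by linarith) hσ (by rw [hK]; linarith)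
  have k4 := main ‖m.2.2.2.1‖ (τ * σ)⁻¹ (norm_nonneg _) (by linarith) (by positivity)
    (by rw [hK, inv_inv]; linarith)
  have k5 := main ‖m.2.2.2.2‖ (τ * σ)⁻¹ (norm_nonneg _) (by linarith) (by positivity)
    (by rw [hK, inv_inv]; linarith)
  exact max_le k1 (max_le k2 (max_le k3 (max_le k4 k5)))

end Norms

/-! ### One step of the dual ADMM -/

section Step

/-- The scalar inequality behind the descent estimate, with `N = ‖Δv‖²`, `P = ‖r⁺‖²`,
`Q = ‖r‖²`, `g = ⟪r⁺, Δv⟫`, `h = ⟪r, Δv⟫` in the application. Below `τ = 1` the cross term is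
absorbed by `N + 2h + Q ≥ 0`, above it by `τ²N - 2τh + Q ≥ 0`; the latter leaves positive
coefficients exactly when `τ² < 1 + τ`. -/
lemma exists_step_scalar {τ : ℝ} (hτ0 : 0 < τ) (hτ : τ ^ 2 < 1 + τ) :
    ∃ c : ℝ, 0 < c ∧ ∀ N P Q g h : ℝ, 0 ≤ N → 0 ≤ P → 0 ≤ Q → 0 ≤ N + 2 * h + Q →
      0 ≤ τ ^ 2 * N - 2 * τ * h + Q → (1 - τ) * h ≤ g →
      c * (N + P) ≤ N + (2 - τ) * P + 2 * g + (5 - τ - 3 * min τ τ⁻¹) / 4 * (Q - P) := by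
  rcases le_or_gt τ 1 with h1 | h1
  · have hmin : min τ τ⁻¹ = τ := min_eq_left (h1.trans (one_le_inv_iff₀.2 ⟨hτ0, h1⟩))
    rw [hmin]
    refine ⟨min τ (3 / 4), by positivity, fun N P Q g h hN hP hQ hp _ hg => ?_⟩
    have e1 := mul_le_mul_of_nonneg_right (min_le_left τ (3 / 4)) hN
    have e2 := mul_le_mul_of_nonneg_right (min_le_right τ (3 / 4)) hP
    have e3 := mul_nonneg (sub_nonneg.2 h1) hp
    nlinarith
  · have hmin : min τ τ⁻¹ = τ⁻¹ := min_eq_right ((inv_le_one_of_one_le₀ h1.le).trans h1.le)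
    rw [hmin]
    have ha : 0 < 1 + τ - τ ^ 2 := by linarith
    refine ⟨min (1 + τ - τ ^ 2) (3 * (1 + τ - τ ^ 2) / (4 * τ)), by positivity,
      fun N P Q g h hN hP hQ _ hm hg => ?_⟩
    have e1 := mul_le_mul_of_nonneg_right
      (min_le_left (1 + τ - τ ^ 2) (3 * (1 + τ - τ ^ 2) / (4 * τ))) hN
    have e2 := mul_le_mul_of_nonneg_right
      (min_le_right (1 + τ - τ ^ 2) (3 * (1 + τ - τ ^ 2) / (4 * τ))) hP
    have e3 : 0 ≤ (τ - 1) / τ * (τ ^ 2 * N - 2 * τ * h + Q) :=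
      mul_nonneg (div_nonneg (by linarith) hτ0.le) hm
    have e4 : 0 ≤ (1 + τ - τ ^ 2) / (4 * τ) * Q := by positivity
    have e5 : N + (2 - τ) * P + 2 * ((1 - τ) * h) + (5 - τ - 3 * τ⁻¹) / 4 * (Q - P)
        = (τ - 1) / τ * (τ ^ 2 * N - 2 * τ * h + Q) + (1 + τ - τ ^ 2) / (4 * τ) * Q
          + (1 + τ - τ ^ 2) * N + 3 * (1 + τ - τ ^ 2) / (4 * τ) * P := by
      field_simp
      ring
    linarith

/-- The contribution of one multiplier block (`x, v` or `y, w`) to the descent estimate. Here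
`xe`, `ve`, `ve'` are errors relative to a KKT point, and `r`, `r'` the old and new constraint
residuals. -/
lemma block_step {E : Type*} [NormedAddCommGroup E] [InnerProductSpace ℝ E] {σ τ s c : ℝ}
    (hσ : 0 < σ) (hτ0 : 0 < τ)
    (hc : ∀ N P Q g h : ℝ, 0 ≤ N → 0 ≤ P → 0 ≤ Q → 0 ≤ N + 2 * h + Q →
      0 ≤ τ ^ 2 * N - 2 * τ * h + Q → (1 - τ) * h ≤ g →
      c * (N + P) ≤ N + (2 - τ) * P + 2 * g + s * (Q - P))
    (xe ve ve' r r' : E) (h1 : 0 ≤ ⟪xe + σ • r', ve'⟫)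
    (h2 : 0 ≤ ⟪r' - (1 - τ) • r, ve' - ve⟫) :
    2 * ⟪xe + σ • r' + σ • (ve' - ve), -(r' + ve')⟫ + (τ * σ)⁻¹ * ‖xe + (τ * σ) • r'‖ ^ 2
      + σ * ‖ve'‖ ^ 2 + s * σ * ‖r'‖ ^ 2 + c * σ * (‖ve' - ve‖ ^ 2 + ‖r'‖ ^ 2)
      ≤ (τ * σ)⁻¹ * ‖xe‖ ^ 2 + σ * ‖ve‖ ^ 2 + s * σ * ‖r‖ ^ 2 := by
  set Δ := ve' - ve with hΔ
  have hve : ve = ve' - Δ := by rw [hΔ]; abel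
  have e1 : 0 ≤ ‖Δ‖ ^ 2 + 2 * ⟪r, Δ⟫ + ‖r‖ ^ 2 := by
    have := sq_nonneg ‖Δ + r‖
    rwa [norm_add_sq_real, real_inner_comm] at this
  have e2 : 0 ≤ τ ^ 2 * ‖Δ‖ ^ 2 - 2 * τ * ⟪r, Δ⟫ + ‖r‖ ^ 2 := by
    have := sq_nonneg ‖τ • Δ - r‖
    rw [norm_sub_sq_real, norm_smul, real_inner_smul_left, real_inner_comm, mul_pow,
      Real.norm_eq_abs, sq_abs] at this
    linarith
  have e3 : (1 - τ) * ⟪r, Δ⟫ ≤ ⟪r', Δ⟫ := by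
    rw [inner_sub_left, real_inner_smul_left] at h2
    linarith
  have key := mul_le_mul_of_nonneg_left
    (hc _ _ _ _ _ (sq_nonneg ‖Δ‖) (sq_nonneg ‖r'‖) (sq_nonneg ‖r‖) e1 e2 e3) hσ.le
  rw [hve]
  have e4 : (τ * σ)⁻¹ * ‖xe + (τ * σ) • r'‖ ^ 2
      = (τ * σ)⁻¹ * ‖xe‖ ^ 2 + 2 * ⟪xe, r'⟫ + τ * σ * ‖r'‖ ^ 2 := by
    rw [norm_add_sq_real, norm_smul, real_inner_smul_right, mul_pow, Real.norm_eq_abs, sq_abs]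
    field_simp
  rw [e4]
  simp only [inner_add_left, inner_add_right, inner_neg_right, real_inner_smul_left,
    norm_sub_sq_real, real_inner_self_eq_norm_sq] at h1 ⊢
  rw [real_inner_comm r' Δ, real_inner_comm ve' Δ]
  linarith [real_inner_comm r' Δ, real_inner_comm ve' Δ]

variable (A : 𝒳 →ₗ[ℝ] 𝒵) (B : 𝒴 →ₗ[ℝ] 𝒵) {b : 𝒵} {σ τ : ℝ}

/-- Descent of the `𝒫`-distance to a fixed KKT point `(ub, vb, wb, xb, yb)` in one step of the
dual ADMM. The inner-product hypotheses come from the monotonicity of the subdifferentials of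
the conjugates. -/
lemma exists_descent (hσ : 0 < σ) (hτ0 : 0 < τ) (hτ : τ ^ 2 < 1 + τ) :
    ∃ c : ℝ, 0 < c ∧ ∀ (u u' ub : 𝒵) (v v' vb x x' xb r r' : 𝒳) (w w' wb y y' yb t t' : 𝒴),
      u' + b = A (x + σ • r' + σ • (v' - v)) + B (y + σ • t' + σ • (w' - w)) →
      r = -(LinearMap.adjoint A u) - v → r' = -(LinearMap.adjoint A u') - v' →
      t = -(LinearMap.adjoint B u) - w → t' = -(LinearMap.adjoint B u') - w' →
      x' = x + (τ * σ) • r' → y' = y + (τ * σ) • t' →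
      ub + b = A xb + B yb → LinearMap.adjoint A ub = -vb → LinearMap.adjoint B ub = -wb →
      0 ≤ ⟪x - xb + σ • r', v' - vb⟫ → 0 ≤ ⟪y - yb + σ • t', w' - wb⟫ →
      0 ≤ ⟪r' - (1 - τ) • r, v' - v⟫ → 0 ≤ ⟪t' - (1 - τ) • t, w' - w⟫ →
      pNorm A B σ τ ((u', v', w', x', y') - (ub, vb, wb, xb, yb)) ^ 2
        + c * (‖v' - v‖ ^ 2 + ‖r'‖ ^ 2 + (‖w' - w‖ ^ 2 + ‖t'‖ ^ 2))
      ≤ pNorm A B σ τ ((u, v, w, x, y) - (ub, vb, wb, xb, yb)) ^ 2 := by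
  obtain ⟨c, hc0, hc⟩ := exists_step_scalar hτ0 hτ
  refine ⟨c * σ, by positivity, ?_⟩
  intro u u' ub v v' vb x x' xb r r' w w' wb y y' yb t t' hu hr hr' ht ht' hx hy hub hvb hwb
    h1x h1y h2x h2y
  have ex := block_step hσ hτ0 hc (x - xb) (v - vb) (v' - vb) r r' h1x
    (by rwa [sub_sub_sub_cancel_right])
  have ey := block_step hσ hτ0 hc (y - yb) (w - wb) (w' - wb) t t' h1y
    (by rwa [sub_sub_sub_cancel_right])
  rw [sub_sub_sub_cancel_right] at ex ey
  have hA : LinearMap.adjoint A (u' - ub) = -(r' + (v' - vb)) := by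
    rw [map_sub, hvb, hr']; abel
  have hB : LinearMap.adjoint B (u' - ub) = -(t' + (w' - wb)) := by
    rw [map_sub, hwb, ht']; abel
  have hue : u' - ub = A (x - xb + σ • r' + σ • (v' - v)) + B (y - yb + σ • t' + σ • (w' - w)) := by
    have e1 : u' - ub = (u' + b) - (ub + b) := by abel
    rw [e1, hu, hub]
    simp only [map_add, map_sub]
    abel
  have hn : ‖u' - ub‖ ^ 2 = ⟪x - xb + σ • r' + σ • (v' - v), -(r' + (v' - vb))⟫
      + ⟪y - yb + σ • t' + σ • (w' - w), -(t' + (w' - wb))⟫ := by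
    rw [← hA, ← hB, LinearMap.adjoint_inner_right, LinearMap.adjoint_inner_right,
      ← inner_add_left, ← hue, real_inner_self_eq_norm_sq]
  have k1 : -(LinearMap.adjoint A (u - ub)) - (v - vb) = r := by
    rw [map_sub, hvb, hr]; abel
  have k2 : -(LinearMap.adjoint B (u - ub)) - (w - wb) = t := by
    rw [map_sub, hwb, ht]; abel
  have k3 : -(LinearMap.adjoint A (u' - ub)) - (v' - vb) = r' := by
    rw [hA]; abel
  have k4 : -(LinearMap.adjoint B (u' - ub)) - (w' - wb) = t' := by
    rw [hB]; abel
  have k5 : x' - xb = x - xb + (τ * σ) • r' := by rw [hx]; abel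
  have k6 : y' - yb = y - yb + (τ * σ) • t' := by rw [hy]; abel
  rw [pNorm_sq A B hσ hτ0 hτ, pNorm_sq A B hσ hτ0 hτ]
  simp only [Prod.mk_sub_mk, k1, k2, k3, k4, k5, k6]
  have p1 := sq_nonneg ‖u - ub‖
  have p2 := sq_nonneg ‖u' - ub‖
  linarith

/-- The KKT residual of the new iterate is controlled by the quantities that the descent
estimate gains. -/
lemma exists_residual_le (σ τ : ℝ) (Pp : 𝒳 → 𝒳) (Pq : 𝒴 → 𝒴) :
    ∃ C : ℝ, 0 < C ∧ ∀ (u' : 𝒵) (v v' x x' r' : 𝒳) (w w' y y' t' : 𝒴),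
      u' + b = A (x + σ • r' + σ • (v' - v)) + B (y + σ • t' + σ • (w' - w)) →
      r' = -(LinearMap.adjoint A u') - v' → t' = -(LinearMap.adjoint B u') - w' →
      x' = x + (τ * σ) • r' → y' = y + (τ * σ) • t' →
      ‖v' - Pp (v' + x')‖ ≤ ‖x' - (x + σ • r')‖ → ‖w' - Pq (w' + y')‖ ≤ ‖y' - (y + σ • t')‖ →
      euclNorm (kktMap A B b Pp Pq (u', v', w', x', y')) ^ 2
        ≤ C * (‖v' - v‖ ^ 2 + ‖r'‖ ^ 2 + (‖w' - w‖ ^ 2 + ‖t'‖ ^ 2)) := by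
  obtain ⟨α, hα0, hα⟩ := exists_norm_le A
  obtain ⟨β, hβ0, hβ⟩ := exists_norm_le B
  set κ := (1 - τ) ^ 2 with hκ
  have hκ0 : 0 ≤ κ := sq_nonneg _
  refine ⟨4 * (α ^ 2 + β ^ 2) * σ ^ 2 * (κ + 1) + κ * σ ^ 2 + 1, by positivity, ?_⟩
  intro u' v v' x x' r' w w' y y' t' hu hr ht hx hy hp hq
  have hblock : ∀ a d ρ : ℝ, 0 ≤ a → 0 ≤ d → 0 ≤ ρ →
      a ≤ |σ * (1 - τ)| * ρ + |σ| * d → a ^ 2 ≤ 2 * σ ^ 2 * (κ + 1) * (d ^ 2 + ρ ^ 2) := by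
    intro a d ρ ha hd hρ h
    have h1 := pow_le_pow_left₀ ha h 2
    have h2 : (|σ * (1 - τ)| * ρ + |σ| * d) ^ 2
        ≤ 2 * ((|σ * (1 - τ)| * ρ) ^ 2 + (|σ| * d) ^ 2) := by
      nlinarith [sq_nonneg (|σ * (1 - τ)| * ρ - |σ| * d)]
    rw [mul_pow, mul_pow, sq_abs, sq_abs, mul_pow, ← hκ] at h2
    have h3 : 0 ≤ σ ^ 2 * κ * d ^ 2 := by positivity
    have h4 : 0 ≤ σ ^ 2 * ρ ^ 2 := by positivity
    linarith
  have hz1 : ‖(σ * (1 - τ)) • r' + σ • (v' - v)‖ ≤ |σ * (1 - τ)| * ‖r'‖ + |σ| * ‖v' - v‖ := by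
    refine (norm_add_le _ _).trans ?_
    rw [norm_smul, norm_smul, Real.norm_eq_abs, Real.norm_eq_abs]
  have hz2 : ‖(σ * (1 - τ)) • t' + σ • (w' - w)‖ ≤ |σ * (1 - τ)| * ‖t'‖ + |σ| * ‖w' - w‖ := by
    refine (norm_add_le _ _).trans ?_
    rw [norm_smul, norm_smul, Real.norm_eq_abs, Real.norm_eq_abs]
  have hb1 := hblock _ _ _ (norm_nonneg _) (norm_nonneg _) (norm_nonneg _) hz1
  have hb2 := hblock _ _ _ (norm_nonneg _) (norm_nonneg _) (norm_nonneg _) hz2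
  have hR1 : u' + b - A x' - B y' = A ((σ * (1 - τ)) • r' + σ • (v' - v))
      + B ((σ * (1 - τ)) • t' + σ • (w' - w)) := by
    rw [hu, hx, hy]
    simp only [map_add, map_smul, map_sub, mul_sub, sub_smul, mul_one, mul_comm σ τ]
    abel
  set z1 := (σ * (1 - τ)) • r' + σ • (v' - v)
  set z2 := (σ * (1 - τ)) • t' + σ • (w' - w)
  have n1 : ‖u' + b - A x' - B y'‖ ^ 2 ≤ 2 * (α ^ 2 * ‖z1‖ ^ 2) + 2 * (β ^ 2 * ‖z2‖ ^ 2) := by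
    rw [hR1]
    have h1 := pow_le_pow_left₀ (norm_nonneg _)
      ((norm_add_le (A z1) (B z2)).trans (add_le_add (hα z1) (hβ z2))) 2
    nlinarith [sq_nonneg (α * ‖z1‖ - β * ‖z2‖)]
  have hxr : x' - (x + σ • r') = (-(σ * (1 - τ))) • r' := by
    rw [hx]; module
  have hyr : y' - (y + σ • t') = (-(σ * (1 - τ))) • t' := by
    rw [hy]; module
  rw [hxr, norm_smul, Real.norm_eq_abs, abs_neg] at hp
  rw [hyr, norm_smul, Real.norm_eq_abs, abs_neg] at hq
  have n2 := pow_le_pow_left₀ (norm_nonneg _) hp 2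
  have n3 := pow_le_pow_left₀ (norm_nonneg _) hq 2
  rw [mul_pow, sq_abs, mul_pow, ← hκ] at n2 n3
  have hE : euclNorm (kktMap A B b Pp Pq (u', v', w', x', y')) ^ 2
      = ‖u' + b - A x' - B y'‖ ^ 2 + ‖v' - Pp (v' + x')‖ ^ 2 + ‖w' - Pq (w' + y')‖ ^ 2
        + ‖r'‖ ^ 2 + ‖t'‖ ^ 2 := by
    rw [hr, ht]
    exact Real.sq_sqrt (by positivity)
  rw [hE]
  have q1 := mul_le_mul_of_nonneg_left hb1 (sq_nonneg α)
  have q2 := mul_le_mul_of_nonneg_left hb2 (sq_nonneg β)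
  set a1 := ‖v' - v‖ ^ 2
  set a2 := ‖r'‖ ^ 2
  set a3 := ‖w' - w‖ ^ 2
  set a4 := ‖t'‖ ^ 2
  have ha1 : 0 ≤ a1 := sq_nonneg _
  have ha2 : 0 ≤ a2 := sq_nonneg _
  have ha3 : 0 ≤ a3 := sq_nonneg _
  have ha4 : 0 ≤ a4 := sq_nonneg _
  have m1 : 0 ≤ 4 * α ^ 2 * σ ^ 2 * (κ + 1) * (a3 + a4) := by positivity
  have m2 : 0 ≤ 4 * β ^ 2 * σ ^ 2 * (κ + 1) * (a1 + a2) := by positivity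
  have m3 : 0 ≤ κ * σ ^ 2 * (a1 + a3) := by positivity
  linarith

end Step

/-! ### Linear convergence -/

/-- **Local linear convergence of the dual ADMM.** If the KKT solution set
`Ω̄ = {m | R(m) = 0}` is nonempty and the KKT mapping `R` is piecewise
polyhedral, then the dual ADMM sequence `mᵏ = (uᵏ,vᵏ,wᵏ,xᵏ,yᵏ)` satisfies,
for some `η̂ > 0` and `μ̂ ∈ (0,1)` and all `k ≥ 1`,
`dist(mᵏ, Ω̄) ≤ η̂ ‖R(mᵏ)‖` and `dist_𝒫(m^{k+1}, Ω̄) ≤ μ̂ dist_𝒫(mᵏ, Ω̄)`. -/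
theorem dADMM_local_linear_convergence
    (A : 𝒳 →ₗ[ℝ] 𝒵) (B : 𝒴 →ₗ[ℝ] 𝒵) (b : 𝒵)
    (p : 𝒳 → EReal) (hp : ProperConvexLsc p)
    (q : 𝒴 → EReal) (hq : ProperConvexLsc q)
    (Pp : 𝒳 → 𝒳) (hPp : ∀ z : 𝒳, IsProx (fenchelConj p) 1 z (Pp z))
    (Pq : 𝒴 → 𝒴) (hPq : ∀ z : 𝒴, IsProx (fenchelConj q) 1 z (Pq z))
    (σ τ : ℝ) (hσ : 0 < σ) (hτ0 : 0 < τ) (hτ1 : τ < (1 + Real.sqrt 5) / 2)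
    (hΩ : {m : 𝒵 × 𝒳 × 𝒴 × 𝒳 × 𝒴 | kktMap A B b Pp Pq m = 0}.Nonempty)
    (hpoly : PiecewisePolyhedral
      {mm : (𝒵 × 𝒳 × 𝒴 × 𝒳 × 𝒴) × (𝒵 × 𝒳 × 𝒴 × 𝒳 × 𝒴) |
        mm.2 = kktMap A B b Pp Pq mm.1})
    (u : ℕ → 𝒵) (v : ℕ → 𝒳) (w : ℕ → 𝒴) (x : ℕ → 𝒳) (y : ℕ → 𝒴)
    (hu : ∀ k : ℕ,
      u (k + 1) + σ • A (LinearMap.adjoint A (u (k + 1)))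
          + σ • B (LinearMap.adjoint B (u (k + 1)))
        = A (x k) + B (y k) - b - σ • A (v k) - σ • B (w k))
    (hv : ∀ k : ℕ,
      IsProx (fenchelConj p) σ⁻¹
        (σ⁻¹ • x k - LinearMap.adjoint A (u (k + 1))) (v (k + 1)))
    (hw : ∀ k : ℕ,
      IsProx (fenchelConj q) σ⁻¹
        (σ⁻¹ • y k - LinearMap.adjoint B (u (k + 1))) (w (k + 1)))
    (hx : ∀ k : ℕ,
      x (k + 1) = x k + (τ * σ) • (-(LinearMap.adjoint A (u (k + 1))) - v (k + 1)))
    (hy : ∀ k : ℕ,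
      y (k + 1) = y k + (τ * σ) • (-(LinearMap.adjoint B (u (k + 1))) - w (k + 1))) :
    ∃ η : ℝ, 0 < η ∧ ∃ μ : ℝ, 0 < μ ∧ μ < 1 ∧
      ∀ k : ℕ, 1 ≤ k →
        distEucl (u k, v k, w k, x k, y k)
            {m : 𝒵 × 𝒳 × 𝒴 × 𝒳 × 𝒴 | kktMap A B b Pp Pq m = 0}
          ≤ η * euclNorm (kktMap A B b Pp Pq (u k, v k, w k, x k, y k)) ∧
        distPnorm A B σ τ (u (k + 1), v (k + 1), w (k + 1), x (k + 1), y (k + 1))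
            {m : 𝒵 × 𝒳 × 𝒴 × 𝒳 × 𝒴 | kktMap A B b Pp Pq m = 0}
          ≤ μ * distPnorm A B σ τ (u k, v k, w k, x k, y k)
              {m : 𝒵 × 𝒳 × 𝒴 × 𝒳 × 𝒴 | kktMap A B b Pp Pq m = 0} := by
  have hτ : τ ^ 2 < 1 + τ := by
    have h5 : √5 ^ 2 = 5 := Real.sq_sqrt (by norm_num)
    have h5' : 1 ≤ √5 := Real.one_le_sqrt.2 (by norm_num)
    have := mul_pos (sub_pos.2 hτ1) (by linarith : 0 < τ - (1 - √5) / 2)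
    nlinarith
  have hσi : 0 < σ⁻¹ := inv_pos.2 hσ
  set Ω := {m : 𝒵 × 𝒳 × 𝒴 × 𝒳 × 𝒴 | kktMap A B b Pp Pq m = 0} with hΩdef
  set m : ℕ → 𝒵 × 𝒳 × 𝒴 × 𝒳 × 𝒴 := fun k => (u k, v k, w k, x k, y k) with hm
  set r : ℕ → 𝒳 := fun k => -(LinearMap.adjoint A (u k)) - v k with hr
  set t : ℕ → 𝒴 := fun k => -(LinearMap.adjoint B (u k)) - w k with ht
  -- the subgradients certified by the proximal steps are `x k + σ • r (k + 1)` and its analogue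
  have hgx : ∀ k, (σ⁻¹)⁻¹ • (σ⁻¹ • x k - LinearMap.adjoint A (u (k + 1)) - v (k + 1))
      = x k + σ • r (k + 1) := by
    intro k
    rw [inv_inv, sub_sub, smul_sub, smul_inv_smul₀ hσ.ne']
    simp only [hr]
    module
  have hgy : ∀ k, (σ⁻¹)⁻¹ • (σ⁻¹ • y k - LinearMap.adjoint B (u (k + 1)) - w (k + 1))
      = y k + σ • t (k + 1) := by
    intro k
    rw [inv_inv, sub_sub, smul_sub, smul_inv_smul₀ hσ.ne']
    simp only [ht]
    module
  have hu' : ∀ k, u (k + 1) + b = A (x k + σ • r (k + 1) + σ • (v (k + 1) - v k))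
      + B (y k + σ • t (k + 1) + σ • (w (k + 1) - w k)) := by
    intro k
    have e1 : u (k + 1) = A (x k) + B (y k) - b - σ • A (v k) - σ • B (w k)
        - σ • A (LinearMap.adjoint A (u (k + 1))) - σ • B (LinearMap.adjoint B (u (k + 1))) := by
      rw [← hu k]
      abel
    simp only [hr, ht]
    simp only [map_add, map_sub, map_smul, map_neg]
    nth_rewrite 1 [e1]
    module
  obtain ⟨c, hc0, hc⟩ := exists_descent A B (b := b) hσ hτ0 hτ
  obtain ⟨C, hC0, hC⟩ := exists_residual_le A B (b := b) σ τ Pp Pq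
  have hdesc : ∀ k, 1 ≤ k → ∀ ω ∈ Ω, pNorm A B σ τ (m (k + 1) - ω) ^ 2
      + c / C * euclNorm (kktMap A B b Pp Pq (m (k + 1))) ^ 2 ≤ pNorm A B σ τ (m k - ω) ^ 2 := by
    rintro k hk ⟨ub, vb, wb, xb, yb⟩ hω
    obtain ⟨j, rfl⟩ : ∃ j, k = j + 1 := ⟨k - 1, by omega⟩
    simp only [hΩdef, Set.mem_ofPred_eq, kktMap, Prod.mk_eq_zero] at hω
    obtain ⟨w1, w2, w3, w4, w5⟩ := hω
    have b1 : ub + b = A xb + B yb := by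
      rw [sub_sub, sub_eq_zero] at w1
      exact w1
    have b4 : LinearMap.adjoint A ub = -vb := by
      rw [← sub_eq_zero.1 w4, neg_neg]
    have b5 : LinearMap.adjoint B ub = -wb := by
      rw [← sub_eq_zero.1 w5, neg_neg]
    have px := hPp (vb + xb)
    have py := hPq (wb + yb)
    rw [← sub_eq_zero.1 w2] at px
    rw [← sub_eq_zero.1 w3] at py
    have h1x := IsProx.monotone hp hσi one_pos (hv (j + 1)) px
    have h1y := IsProx.monotone hq hσi one_pos (hw (j + 1)) py
    rw [hgx, inv_one, one_smul, add_sub_cancel_left, add_sub_right_comm] at h1x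
    rw [hgy, inv_one, one_smul, add_sub_cancel_left, add_sub_right_comm] at h1y
    have h2x := IsProx.monotone hp hσi hσi (hv (j + 1)) (hv j)
    have h2y := IsProx.monotone hq hσi hσi (hw (j + 1)) (hw j)
    have e2x : x (j + 1) + σ • r (j + 1 + 1) - (x j + σ • r (j + 1))
        = σ • (r (j + 1 + 1) - (1 - τ) • r (j + 1)) := by
      rw [hx j]
      change x j + (τ * σ) • r (j + 1) + _ - _ = _
      module
    have e2y : y (j + 1) + σ • t (j + 1 + 1) - (y j + σ • t (j + 1))
        = σ • (t (j + 1 + 1) - (1 - τ) • t (j + 1)) := by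
      rw [hy j]
      change y j + (τ * σ) • t (j + 1) + _ - _ = _
      module
    rw [hgx, hgx, e2x, real_inner_smul_left] at h2x
    rw [hgy, hgy, e2y, real_inner_smul_left] at h2y
    have d := hc _ _ ub _ _ vb _ _ xb (r (j + 1)) (r (j + 1 + 1)) _ _ wb _ _ yb (t (j + 1))
      (t (j + 1 + 1)) (hu' (j + 1)) rfl rfl rfl rfl (hx (j + 1)) (hy (j + 1)) b1 b4 b5
      h1x h1y (nonneg_of_mul_nonneg_right h2x hσ) (nonneg_of_mul_nonneg_right h2y hσ)
    have n2 := IsProx.norm_residual_le hp hσi (hv (j + 1)) (hgx (j + 1))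
      (hPp (v (j + 1 + 1) + x (j + 1 + 1)))
    have n3 := IsProx.norm_residual_le hq hσi (hw (j + 1)) (hgy (j + 1))
      (hPq (w (j + 1 + 1) + y (j + 1 + 1)))
    have e := hC _ (v (j + 1)) _ _ _ (r (j + 1 + 1)) (w (j + 1)) _ _ _ (t (j + 1 + 1))
      (hu' (j + 1)) rfl rfl (hx (j + 1)) (hy (j + 1)) n2 n3
    have e' := mul_le_mul_of_nonneg_left e (div_pos hc0 hC0).le
    rw [← mul_assoc, div_mul_cancel₀ _ hC0.ne'] at e'
    simp only [hm]
    linarith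
  obtain ⟨ω₀, hω₀⟩ := hΩ
  have hΩne : Nonempty Ω := ⟨⟨ω₀, hω₀⟩⟩
  have hmono : ∀ k, 1 ≤ k → pNorm A B σ τ (m k - ω₀) ≤ pNorm A B σ τ (m 1 - ω₀) := by
    intro k hk
    induction k, hk using Nat.le_induction with
    | base => exact le_rfl
    | succ k hk ih =>
      refine le_trans ?_ ih
      refine le_of_sq_le_sq ?_ (pNorm_nonneg A B _)
      have h1 := hdesc k hk ω₀ hω₀
      have h2 : 0 ≤ c / C * euclNorm (kktMap A B b Pp Pq (m (k + 1))) ^ 2 := by positivity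
      linarith
  have hbdd : Bornology.IsBounded (m '' {k | 1 ≤ k}) := by
    obtain ⟨C₁, hC₁, hle⟩ := exists_norm_le_pNorm A B hσ hτ0 hτ
    refine (Metric.isBounded_closedBall (x := ω₀)
      (r := C₁ * pNorm A B σ τ (m 1 - ω₀))).subset ?_
    rintro _ ⟨k, hk, rfl⟩
    rw [Metric.mem_closedBall, dist_eq_norm]
    exact (hle _).trans (mul_le_mul_of_nonneg_left (hmono k hk) hC₁)
  obtain ⟨L, hL0, hL⟩ := hpoly.error_bound hω₀ hbdd
  obtain ⟨D, hD0, hD⟩ := exists_pNorm_le A B hσ hτ0 hτ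
  have hnear : ∀ k, 1 ≤ k → ∃ ω ∈ Ω, ‖m k - ω‖ ≤ L * euclNorm (kktMap A B b Pp Pq (m k)) := by
    intro k hk
    obtain ⟨ω, hω, hle⟩ := hL (m k) ⟨k, hk, rfl⟩
    exact ⟨ω, hω, hle.trans (mul_le_mul_of_nonneg_left (norm_le_euclNorm _) hL0.le)⟩
  have hbE : ∀ z : 𝒵 × 𝒳 × 𝒴 × 𝒳 × 𝒴,
      BddBelow (Set.range fun ω : Ω => euclNorm (z - (ω : 𝒵 × 𝒳 × 𝒴 × 𝒳 × 𝒴))) := fun z =>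
    ⟨0, by rintro _ ⟨ω, rfl⟩; exact euclNorm_nonneg _⟩
  have hbP : ∀ z : 𝒵 × 𝒳 × 𝒴 × 𝒳 × 𝒴,
      BddBelow (Set.range fun ω : Ω => pNorm A B σ τ (z - (ω : 𝒵 × 𝒳 × 𝒴 × 𝒳 × 𝒴))) := fun z =>
    ⟨0, by rintro _ ⟨ω, rfl⟩; exact pNorm_nonneg A B _⟩
  have hP0 : ∀ z, 0 ≤ distPnorm A B σ τ z Ω := fun z =>
    Real.iInf_nonneg fun ω => pNorm_nonneg A B _
  -- `κ` is the relative decrease of the squared `𝒫`-distance, measured at the new iterate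
  set κ := c / C / (D * L) ^ 2 with hκ
  have hκ0 : 0 < κ := by positivity
  have hs1 : 1 < √(1 + κ) := by
    rw [Real.lt_sqrt zero_le_one]
    linarith
  have hs0 : 0 < √(1 + κ) := by linarith
  refine ⟨3 * L, by positivity, (√(1 + κ))⁻¹, inv_pos.2 hs0, inv_lt_one_of_one_lt₀ hs1,
    fun k hk => ⟨?_, ?_⟩⟩
  · obtain ⟨ω, hω, hle⟩ := hnear k hk
    calc distEucl (m k) Ω ≤ euclNorm (m k - ω) := ciInf_le (hbE (m k)) ⟨ω, hω⟩
      _ ≤ 3 * ‖m k - ω‖ := euclNorm_le_norm _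
      _ ≤ 3 * (L * euclNorm (kktMap A B b Pp Pq (m k))) := by gcongr
      _ = 3 * L * euclNorm (kktMap A B b Pp Pq (m k)) := by ring
  · change distPnorm A B σ τ (m (k + 1)) Ω ≤ (√(1 + κ))⁻¹ * distPnorm A B σ τ (m k) Ω
    rw [← div_eq_inv_mul, le_div_iff₀ hs0]
    refine le_ciInf fun ω => ?_
    refine le_of_sq_le_sq ?_ (pNorm_nonneg A B _)
    rw [mul_pow, Real.sq_sqrt (by positivity)]
    have h1 : distPnorm A B σ τ (m (k + 1)) Ω ≤ pNorm A B σ τ (m (k + 1) - ω) :=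
      ciInf_le (hbP _) ω
    have h2 := pow_le_pow_left₀ (hP0 _) h1 2
    obtain ⟨ω', hω', hle⟩ := hnear (k + 1) (by omega)
    have h3 : distPnorm A B σ τ (m (k + 1)) Ω
        ≤ D * L * euclNorm (kktMap A B b Pp Pq (m (k + 1))) :=
      calc distPnorm A B σ τ (m (k + 1)) Ω ≤ pNorm A B σ τ (m (k + 1) - ω') :=
            ciInf_le (hbP _) ⟨ω', hω'⟩
        _ ≤ D * ‖m (k + 1) - ω'‖ := hD _
        _ ≤ D * (L * euclNorm (kktMap A B b Pp Pq (m (k + 1)))) := by gcongr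
        _ = _ := by ring
    have h4 := pow_le_pow_left₀ (hP0 _) h3 2
    have h5 : κ * distPnorm A B σ τ (m (k + 1)) Ω ^ 2
        ≤ c / C * euclNorm (kktMap A B b Pp Pq (m (k + 1))) ^ 2 := by
      refine (mul_le_mul_of_nonneg_left h4 hκ0.le).trans_eq ?_
      rw [hκ, mul_pow (D * L), ← mul_assoc, div_mul_cancel₀ _ (by positivity)]
    have h6 := hdesc k hk ω ω.2
    linarith
end
end

section
/- Moreau identity. Let E be a finite-dimensional real inner product space, f : E → ℝ ∪ {+∞} a proper, lower semicontinuous, convex function, and σ > 0. Then for every x ∈ E, Prox_{σf}(x) + σ · Prox_{f*/σ}(x/σ) = x. -/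
/-!
Put `p = Prox_{σf}(x)` and `g = σ⁻¹ (x - p)`. Convexity turns minimality of `p` into the
subgradient inequality `f u ≥ f p + ⟪g, u - p⟫` (`prox_subgradient`), that is,
`f* g = ⟪g, p⟫ - f p`. The definition of the conjugate also gives
`f* y ≥ ⟪y, p⟫ - f p = f* g + ⟪y - g, p⟫` for every `y`. Inserting `y = p₂ = Prox_{f*/σ}(x/σ)` and
comparing `p₂` with the competitor `g` in the second proximal problem yields
`(σ/2) ‖p₂ - g‖² ≤ 0`, so `p₂ = g`, which is the identity.
-/

open scoped RealInnerProductSpace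
open Filter Topology

noncomputable section

/-- The proximal point has a finite value. -/
lemma IsProx.ne_top {E : Type*} [NormedAddCommGroup E] [InnerProductSpace ℝ E]
    {f : E → EReal} (hf : ProperConvexLsc f) {σ : ℝ} {x p : E} (h : IsProx f σ x p) :
    f p ≠ ⊤ := by
  obtain ⟨hbot, ⟨u, hu⟩, -, -⟩ := hf
  intro hp
  have h' := h u
  lift f u to ℝ using ⟨hu, hbot u⟩ with b
  rw [hp, EReal.top_add_coe, ← EReal.coe_add] at h'
  exact EReal.coe_ne_top _ (top_le_iff.mp h')

/-- The optimality condition `σ⁻¹ (x - p) ∈ ∂f(p)`, at the points where `f` is finite. -/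
lemma prox_subgradient {E : Type*} [NormedAddCommGroup E] [InnerProductSpace ℝ E]
    {f : E → EReal} (hf : ProperConvexLsc f) {σ : ℝ} {x p : E}
    (h : IsProx f σ x p) {a b : ℝ} (ha : f p = a) {u : E} (hb : f u = b) :
    a + ⟪σ⁻¹ • (x - p), u - p⟫ ≤ b := by
  -- Minimality against the point `p + t (u - p)`, divided by `t`.
  have key : ∀ t ∈ Set.Ioc (0 : ℝ) 1,
      a ≤ b + (1 / (2 * σ)) * (2 * ⟪p - x, u - p⟫ + t * ‖u - p‖ ^ 2) := by
    intro t ht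
    have h1 := hf.2.2.2 p u (1 - t) t (by linarith [ht.2]) ht.1.le (by ring)
    have h2 := (h _).trans (add_le_add_left h1
      (((1 / (2 * σ)) * ‖((1 - t) • p + t • u) - x‖ ^ 2 : ℝ) : EReal))
    rw [ha, hb] at h2
    norm_cast at h2
    have h3 : (1 - t) • p + t • u - x = (p - x) + t • (u - p) := by module
    rw [h3, norm_add_sq_real, inner_smul_right, norm_smul, mul_pow, Real.norm_eq_abs,
      sq_abs] at h2
    refine le_of_mul_le_mul_left ?_ ht.1
    linarith
  -- The limit `t → 0⁺`.
  have hlim : Tendsto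
      (fun t : ℝ => b + (1 / (2 * σ)) * (2 * ⟪p - x, u - p⟫ + t * ‖u - p‖ ^ 2)) (𝓝[>] 0)
      (𝓝 (b + (1 / (2 * σ)) * (2 * ⟪p - x, u - p⟫ + 0 * ‖u - p‖ ^ 2))) :=
    (Continuous.tendsto (by fun_prop) 0).mono_left nhdsWithin_le_nhds
  have hle := ge_of_tendsto hlim (by
    filter_upwards [Ioc_mem_nhdsGT (zero_lt_one (α := ℝ))] with t ht using key t ht)
  have hneg : ⟪x - p, u - p⟫ = -⟪p - x, u - p⟫ := by rw [← inner_neg_left, neg_sub]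
  rw [real_inner_smul_left, hneg]
  have e : (1 / (2 * σ)) * (2 * ⟪p - x, u - p⟫ + 0 * ‖u - p‖ ^ 2) = σ⁻¹ * ⟪p - x, u - p⟫ := by
    ring
  linarith

/-- **Moreau identity.** If `f` is proper, lsc and convex on a finite-dimensional
real inner product space and `σ > 0`, then `Prox_{σf}(x) + σ Prox_{f*/σ}(x/σ) = x`. -/
theorem moreau_identity {E : Type*} [NormedAddCommGroup E] [InnerProductSpace ℝ E]
    [FiniteDimensional ℝ E]
    (f : E → EReal) (hf : ProperConvexLsc f) (σ : ℝ) (hσ : 0 < σ) (x : E)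
    (p₁ p₂ : E) (h₁ : IsProx f σ x p₁)
    (h₂ : IsProx (fenchelConj f) σ⁻¹ (σ⁻¹ • x) p₂) :
    p₁ + σ • p₂ = x := by
  obtain ⟨a, ha⟩ : ∃ a : ℝ, f p₁ = a :=
    ⟨_, (EReal.coe_toReal (h₁.ne_top hf) (hf.1 p₁)).symm⟩
  set g : E := σ⁻¹ • (x - p₁) with hg
  have hconj_g : fenchelConj f g ≤ ((⟪g, p₁⟫ - a : ℝ) : EReal) := by
    refine iSup_le fun u => ?_
    by_cases hu : f u = ⊤
    · simp [hu]
    · obtain ⟨b, hb⟩ : ∃ b : ℝ, f u = b := ⟨_, (EReal.coe_toReal hu (hf.1 u)).symm⟩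
      have hs := prox_subgradient hf h₁ ha hb
      rw [← hg, inner_sub_right] at hs
      rw [hb]
      norm_cast
      linarith
  have hconj_p : ((⟪p₂, p₁⟫ - a : ℝ) : EReal) ≤ fenchelConj f p₂ := by
    have := le_iSup (fun u : E => ((⟪p₂, u⟫ : ℝ) : EReal) - f u) p₁
    rw [ha, ← EReal.coe_sub] at this
    exact this
  have hmin := (add_le_add_left hconj_p _).trans ((h₂ g).trans (add_le_add_left hconj_g _))
  norm_cast at hmin
  have e1 : p₂ - σ⁻¹ • x = (p₂ - g) - σ⁻¹ • p₁ := by rw [hg]; module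
  have e2 : g - σ⁻¹ • x = -(σ⁻¹ • p₁) := by rw [hg]; module
  rw [e1, e2, norm_neg, norm_sub_sq_real, real_inner_smul_right, inner_sub_left] at hmin
  have e3 : 1 / (2 * σ⁻¹) * (‖p₂ - g‖ ^ 2 - 2 * (σ⁻¹ * (⟪p₂, p₁⟫ - ⟪g, p₁⟫)) + ‖σ⁻¹ • p₁‖ ^ 2)
      = σ / 2 * ‖p₂ - g‖ ^ 2 - (⟪p₂, p₁⟫ - ⟪g, p₁⟫) + 1 / (2 * σ⁻¹) * ‖σ⁻¹ • p₁‖ ^ 2 := by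
    field_simp
  rw [e3] at hmin
  have hsq : ‖p₂ - g‖ ^ 2 ≤ 0 := by
    refine le_of_mul_le_mul_left ?_ (half_pos hσ)
    linarith
  have hp : p₂ = g := by
    rw [← sub_eq_zero, ← norm_eq_zero]
    exact pow_eq_zero_iff two_ne_zero |>.mp (le_antisymm hsq (sq_nonneg _))
  rw [hp, hg, smul_inv_smul₀ hσ.ne', add_sub_cancel]
end
end

section
/- Proximal mapping of the ℓ∞ norm via projection onto the ℓ¹ ball. Let σ > 0 and y ∈ ℝⁿ, and let Ω = {z ∈ ℝⁿ : ‖z‖₁ ≤ σ}, a nonempty closed convex set, with P_Ω(y) the unique point of Ω nearest to y in the Euclidean norm. Then the function x ↦ σ‖x‖_∞ + (1/2)‖x − y‖₂² has a unique minimizer over ℝⁿ, equal to y − P_Ω(y). -/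
/-!
Write `Ω` for the `ℓ¹` ball of radius `σ`, `p` for the point of `Ω` nearest to `y`, and
`F x = σ‖x‖∞ + ½‖x - y‖²`. The proof rests on the duality between the `ℓ¹` and `ℓ∞` norms:
the support function of `Ω` is `σ‖·‖∞`.

The variational inequality for the projection, `⟪y - p, z - p⟫ ≤ 0` on `Ω`
(`inner_le_zero_of_nearest`), tested at the signed vertices `z = ± σ eⱼ`, gives
`σ‖y - p‖∞ ≤ ⟪y - p, p⟫` (`sup_le_inner_of_nearest`), while Hölder's inequality gives
`⟪x, p⟫ ≤ σ‖x‖∞` for every `x` (`inner_le_sup`). So `p` is a subgradient of `σ‖·‖∞` at `y - p`,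
and expanding the square yields the quadratic growth
`F (y - p) + ½‖x - (y - p)‖² ≤ F x` (`quadratic_growth`), from which both minimality and
uniqueness of the minimizer follow.
-/

namespace ProxLinf

/-- The closed `ℓ¹` ball of radius `σ` centred at the origin. -/
def l1Ball (n : ℕ) (σ : ℝ) : Set (EuclideanSpace ℝ (Fin n)) := {z | (∑ i, |z i|) ≤ σ}

variable {n : ℕ} {σ : ℝ}

lemma l1Ball_nonempty (hσ : 0 < σ) : (l1Ball n σ).Nonempty :=
  ⟨0, by simp [l1Ball, hσ.le]⟩

lemma l1Ball_isClosed : IsClosed (l1Ball n σ) :=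
  isClosed_le (by fun_prop) continuous_const

lemma l1Ball_convex : Convex ℝ (l1Ball n σ) := by
  intro x hx z hz a b ha hb hab
  simp only [l1Ball, Set.mem_ofPred_eq] at hx hz ⊢
  calc ∑ i, |(a • x + b • z) i| ≤ ∑ i, (a * |x i| + b * |z i|) := by
        refine Finset.sum_le_sum fun i _ => ?_
        simpa [abs_mul, abs_of_nonneg ha, abs_of_nonneg hb] using abs_add_le (a * x i) (b * z i)
    _ = a * ∑ i, |x i| + b * ∑ i, |z i| := by
        rw [Finset.sum_add_distrib, Finset.mul_sum, Finset.mul_sum]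
    _ ≤ a * σ + b * σ := by gcongr
    _ = σ := by rw [← add_mul, hab, one_mul]

lemma exists_nearest (hσ : 0 < σ) (y : EuclideanSpace ℝ (Fin n)) :
    ∃ p ∈ l1Ball n σ, ∀ z ∈ l1Ball n σ, ‖y - p‖ ≤ ‖y - z‖ := by
  obtain ⟨p, hp, h⟩ := exists_norm_eq_iInf_of_complete_convex (l1Ball_nonempty hσ)
    l1Ball_isClosed.isComplete l1Ball_convex y
  refine ⟨p, hp, fun z hz => h.trans_le ?_⟩
  exact ciInf_le (f := fun w : l1Ball n σ => ‖y - w‖)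
    ⟨0, Set.forall_mem_range.2 fun _ => norm_nonneg _⟩ ⟨z, hz⟩

lemma inner_le_zero_of_nearest {y p : EuclideanSpace ℝ (Fin n)} (hp : p ∈ l1Ball n σ)
    (h : ∀ z ∈ l1Ball n σ, ‖y - p‖ ≤ ‖y - z‖) :
    ∀ z ∈ l1Ball n σ, inner ℝ (y - p) (z - p) ≤ 0 := by
  refine (norm_eq_iInf_iff_real_inner_le_zero l1Ball_convex hp).1 (le_antisymm ?_ ?_)
  · have : Nonempty (l1Ball n σ) := ⟨⟨p, hp⟩⟩
    exact le_ciInf fun w => h w w.2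
  · exact ciInf_le (f := fun w : l1Ball n σ => ‖y - w‖)
      ⟨0, Set.forall_mem_range.2 fun _ => norm_nonneg _⟩ ⟨p, hp⟩

lemma nearest_unique {y p q : EuclideanSpace ℝ (Fin n)} (hp : p ∈ l1Ball n σ)
    (h : ∀ z ∈ l1Ball n σ, ‖y - p‖ ≤ ‖y - z‖) (hq : q ∈ l1Ball n σ)
    (h₂ : ∀ z ∈ l1Ball n σ, ‖y - q‖ ≤ ‖y - z‖) : q = p := by
  have h1 := inner_le_zero_of_nearest hp h q hq
  have h2 := inner_le_zero_of_nearest hq h₂ p hp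
  -- The two variational inequalities add up to `‖q - p‖² ≤ 0`.
  have h3 : inner ℝ (q - p) (q - p) = inner ℝ (y - p) (q - p) + inner ℝ (y - q) (p - q) := by
    simp only [inner_sub_left, inner_sub_right]
    ring
  rw [real_inner_self_eq_norm_sq] at h3
  have h4 : ‖q - p‖ ^ 2 = 0 := le_antisymm (h3.trans_le (add_nonpos h1 h2)) (sq_nonneg _)
  exact sub_eq_zero.1 (norm_eq_zero.1 (pow_eq_zero_iff two_ne_zero |>.1 h4))

lemma inner_le_sup {p : EuclideanSpace ℝ (Fin n)} (hp : p ∈ l1Ball n σ)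
    (x : EuclideanSpace ℝ (Fin n)) : inner ℝ x p ≤ σ * ⨆ i, |x i| := by
  have hs : ∀ i, |x i| ≤ ⨆ i, |x i| := fun i =>
    le_ciSup (f := fun i => |x i|) (Set.finite_range _).bddAbove i
  have h0 : 0 ≤ ⨆ i, |x i| := Real.iSup_nonneg fun i => abs_nonneg _
  calc inner ℝ x p = ∑ i, p i * x i := by simp [PiLp.inner_apply]
    _ ≤ ∑ i, |p i| * ⨆ i, |x i| := by
        refine Finset.sum_le_sum fun i _ => (le_abs_self _).trans ?_
        rw [abs_mul]
        exact mul_le_mul_of_nonneg_left (hs i) (abs_nonneg _)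
    _ = (∑ i, |p i|) * ⨆ i, |x i| := by rw [Finset.sum_mul]
    _ ≤ σ * ⨆ i, |x i| := mul_le_mul_of_nonneg_right hp h0

lemma sup_le_inner_of_nearest (hn : 0 < n) (hσ : 0 < σ) {y p : EuclideanSpace ℝ (Fin n)}
    (hp : p ∈ l1Ball n σ) (h : ∀ z ∈ l1Ball n σ, ‖y - p‖ ≤ ‖y - z‖) :
    σ * (⨆ i, |(y - p) i|) ≤ inner ℝ (y - p) p := by
  have : Nonempty (Fin n) := ⟨⟨0, hn⟩⟩
  obtain ⟨j, hj⟩ := exists_eq_ciSup_of_finite (f := fun i => |(y - p) i|)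
  rw [← hj]
  have key : ∀ c : ℝ, |c| = σ → c * (y - p) j ≤ inner ℝ (y - p) p := by
    intro c hc
    have hz : EuclideanSpace.single j c ∈ l1Ball n σ := by
      simp [l1Ball, apply_ite abs, hc]
    have := inner_le_zero_of_nearest hp h _ hz
    rw [inner_sub_right, EuclideanSpace.inner_single_right] at this
    simpa using this
  rcases abs_cases ((y - p) j) with ⟨e, _⟩ | ⟨e, _⟩
  · simpa only [e] using key σ (abs_of_pos hσ)
  · simpa only [e, mul_neg, neg_mul] using key (-σ) (by rw [abs_neg, abs_of_pos hσ])

/-- The objective exceeds its value at `y - p` by at least the quadratic `½‖x - (y - p)‖²`. -/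
lemma quadratic_growth (hn : 0 < n) (hσ : 0 < σ) {y p : EuclideanSpace ℝ (Fin n)}
    (hp : p ∈ l1Ball n σ) (h : ∀ z ∈ l1Ball n σ, ‖y - p‖ ≤ ‖y - z‖)
    (x : EuclideanSpace ℝ (Fin n)) :
    σ * (⨆ i, |(y - p) i|) + 1 / 2 * ‖(y - p) - y‖ ^ 2 + 1 / 2 * ‖x - (y - p)‖ ^ 2
      ≤ σ * (⨆ i, |x i|) + 1 / 2 * ‖x - y‖ ^ 2 := by
  have h1 := sup_le_inner_of_nearest hn hσ hp h
  have h2 := inner_le_sup hp x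
  have h3 : ‖x - y‖ ^ 2
      = ‖x - (y - p)‖ ^ 2 - 2 * (inner ℝ x p - inner ℝ (y - p) p) + ‖p‖ ^ 2 := by
    rw [← inner_sub_left, ← norm_sub_sq_real]
    congr 2
    abel
  have h4 : ‖(y - p) - y‖ = ‖p‖ := by
    rw [sub_sub_cancel_left, norm_neg]
  rw [h3, h4]
  linarith

end ProxLinf

/-- **Proximal mapping of the ℓ∞ norm via projection onto the ℓ¹ ball.**
For `σ > 0`, `y ∈ ℝⁿ` and `Ω = {z : ‖z‖₁ ≤ σ}`, the set `Ω` is a nonempty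
closed convex set, there is a unique point of `Ω` nearest to `y`, and the
function `x ↦ σ‖x‖∞ + (1/2)‖x − y‖₂²` has a unique minimizer, equal to
`y − P_Ω(y)`. -/
theorem prox_linf_norm (n : ℕ) (hn : 0 < n) (σ : ℝ) (hσ : 0 < σ)
    (y : EuclideanSpace ℝ (Fin n)) :
    ({z : EuclideanSpace ℝ (Fin n) | (∑ i, |z i|) ≤ σ}.Nonempty ∧
      IsClosed {z : EuclideanSpace ℝ (Fin n) | (∑ i, |z i|) ≤ σ} ∧
      Convex ℝ {z : EuclideanSpace ℝ (Fin n) | (∑ i, |z i|) ≤ σ}) ∧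
    (∃! proj : EuclideanSpace ℝ (Fin n),
      (∑ i, |proj i|) ≤ σ ∧
        ∀ z : EuclideanSpace ℝ (Fin n), (∑ i, |z i|) ≤ σ → ‖y - proj‖ ≤ ‖y - z‖) ∧
    (∀ proj : EuclideanSpace ℝ (Fin n),
      ((∑ i, |proj i|) ≤ σ ∧
        ∀ z : EuclideanSpace ℝ (Fin n), (∑ i, |z i|) ≤ σ → ‖y - proj‖ ≤ ‖y - z‖) →
      (∀ x : EuclideanSpace ℝ (Fin n),
        σ * (⨆ i, |(y - proj) i|) + 1 / 2 * ‖(y - proj) - y‖ ^ 2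
          ≤ σ * (⨆ i, |x i|) + 1 / 2 * ‖x - y‖ ^ 2) ∧
      (∀ xbar : EuclideanSpace ℝ (Fin n),
        (∀ x : EuclideanSpace ℝ (Fin n),
          σ * (⨆ i, |xbar i|) + 1 / 2 * ‖xbar - y‖ ^ 2
            ≤ σ * (⨆ i, |x i|) + 1 / 2 * ‖x - y‖ ^ 2) →
        xbar = y - proj)) := by
  refine ⟨⟨ProxLinf.l1Ball_nonempty hσ, ProxLinf.l1Ball_isClosed, ProxLinf.l1Ball_convex⟩,
    ?_, ?_⟩
  · obtain ⟨p, hp, h⟩ := ProxLinf.exists_nearest hσ y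
    exact ⟨p, ⟨hp, h⟩, fun q hq => ProxLinf.nearest_unique hp h hq.1 hq.2⟩
  · rintro p ⟨hp, h⟩
    have growth := ProxLinf.quadratic_growth hn hσ hp h
    refine ⟨fun x => ?_, fun x hx => ?_⟩
    · exact (le_add_of_nonneg_right (by positivity)).trans (growth x)
    · have h1 := growth x
      have h2 := hx (y - p)
      have h3 : ‖x - (y - p)‖ ^ 2 = 0 := le_antisymm (by linarith) (sq_nonneg _)
      exact sub_eq_zero.1 (norm_eq_zero.1 (pow_eq_zero_iff two_ne_zero |>.1 h3))
end
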